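/- arXiv:2201.02931 — 3 statements merged into one kernel-verified Lean document; each statement's English description precedes it below -/
import Mathlib

section
/- Let D ⊂ ℂ^n be an open polydisc centered at the origin, Γ ⊂ ℂ^n∖{0} an open convex cone, and V = D×Γ. For every symbol of C∞-type f ∈ 𝔖^∞(V) there exist a polydisc D' with closure contained in D and a null-symbol of C∞-type g ∈ 𝔑^∞(D'×Γ) such that f−g is holomorphic on an infinitesimal wedge of type D'×Γ and f−g ∈ 𝔖(D'×Γ). (This is the surjectivity on stalks of the canonical morphism ι : 𝔖/𝔑 → 𝔖^∞/𝔑^∞; its injectivity is immediate from the definitions, so ι induces a bijection on stalks.) -/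
open Complex

noncomputable section

/-- `ℂ^n`. -/
abbrev Cn (n : ℕ) : Type := Fin n → ℂ

/-- The space `ℂ^n_z × ℂ^n_ζ`. -/
abbrev Pt (n : ℕ) : Type := Cn n × Cn n

/-- The Euclidean norm of `ζ ∈ ℂ^n`. -/
def eucNorm {n : ℕ} (ζ : Cn n) : ℝ := Real.sqrt (∑ i, Complex.normSq (ζ i))

/-- `V` is a cone: stable under the dilations `(z, ζ) ↦ (z, tζ)`, `t > 0`. -/
def IsCone {n : ℕ} (V : Set (Pt n)) : Prop :=
  ∀ p ∈ V, ∀ t : ℝ, 0 < t → (p.1, t • p.2) ∈ V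

/-- `K` is a relatively compact subset of `V`. -/
def RelCpt {n : ℕ} (K V : Set (Pt n)) : Prop :=
  IsCompact (closure K) ∧ closure K ⊆ V

/-- `W` is an infinitesimal wedge of type `V`. -/
def IsInfWedge {n : ℕ} (V W : Set (Pt n)) : Prop :=
  W ⊆ V ∧ ∀ K : Set (Pt n), RelCpt K V →
    ∃ δ : ℝ, 0 < δ ∧ ∀ p ∈ K, ∀ t : ℝ, δ < t → (p.1, t • p.2) ∈ W

/-- `V' ⋐cone V` : `V'` is a relatively compact cone in `V`. -/
def ConeRelCpt {n : ℕ} (V' V : Set (Pt n)) : Prop :=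
  ∃ K : Set (Pt n), RelCpt K V ∧
    V' = {p : Pt n | ∃ t : ℝ, 0 < t ∧ ∃ q ∈ K, p = (q.1, t • q.2)}

/-- Wirtinger derivative `∂/∂z_i` in the first variable. -/
def dz {n : ℕ} (i : Fin n) (f : Pt n → ℂ) : Pt n → ℂ := fun p =>
  (1 / 2 : ℂ) * (fderiv ℝ f p ((Pi.single i 1 : Cn n), 0)
    - Complex.I * fderiv ℝ f p ((Pi.single i Complex.I : Cn n), 0))

/-- Wirtinger derivative `∂/∂z̄_i` in the first variable. -/
def dzbar {n : ℕ} (i : Fin n) (f : Pt n → ℂ) : Pt n → ℂ := fun p =>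
  (1 / 2 : ℂ) * (fderiv ℝ f p ((Pi.single i 1 : Cn n), 0)
    + Complex.I * fderiv ℝ f p ((Pi.single i Complex.I : Cn n), 0))

/-- The iterated mixed derivative `∂^α_z ∂^β_z̄` in the first variable. -/
def mixedDeriv {n : ℕ} (α β : Fin n → ℕ) (f : Pt n → ℂ) : Pt n → ℂ :=
  ((List.ofFn fun i => (dz i)^[α i]) ++ (List.ofFn fun i => (dzbar i)^[β i])).foldr
    (fun d g => d g) f

/-- `f ∈ C^∞_z 𝒪_ζ (W)` : `f` is `C^∞` on `W` and holomorphic in the second variable. -/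
def CinfO {n : ℕ} (W : Set (Pt n)) (f : Pt n → ℂ) : Prop :=
  ContDiffOn ℝ (⊤ : ℕ∞) f W ∧
  ∀ z : Cn n, DifferentiableOn ℂ (fun ζ => f (z, ζ)) {ζ : Cn n | (z, ζ) ∈ W}

/-- `f` is a null-symbol of `C^∞`-type on `V`, defined on the infinitesimal wedge `W`. -/
def IsNullSymbolInf {n : ℕ} (V W : Set (Pt n)) (f : Pt n → ℂ) : Prop :=
  IsInfWedge V W ∧ CinfO W f ∧
  ∀ V' : Set (Pt n), IsOpen V' → IsCone V' → ConeRelCpt V' V →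
    ∃ W' : Set (Pt n), W' ⊆ W ∧ IsInfWedge V' W' ∧
      ∀ α β : Fin n → ℕ, ∃ h C : ℝ, 0 < h ∧ 0 < C ∧
        ∀ p ∈ W', ‖mixedDeriv α β f p‖ ≤ C * Real.exp (-h * eucNorm p.2)

/-- `f` is a symbol of `C^∞`-type on `V`, defined on the infinitesimal wedge `W`. -/
def IsSymbolInf {n : ℕ} (V W : Set (Pt n)) (f : Pt n → ℂ) : Prop :=
  IsInfWedge V W ∧ CinfO W f ∧
  (∀ V' : Set (Pt n), IsOpen V' → IsCone V' → ConeRelCpt V' V →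
    ∃ W' : Set (Pt n), W' ⊆ W ∧ IsInfWedge V' W' ∧
      ∀ α β : Fin n → ℕ, ∀ h : ℝ, 0 < h → ∃ C : ℝ, 0 < C ∧
        ∀ p ∈ W', ‖mixedDeriv α β f p‖ ≤ C * Real.exp (h * eucNorm p.2)) ∧
  ∀ i : Fin n, ∃ Wi : Set (Pt n), IsNullSymbolInf V Wi (dzbar i f)


/-- `f` is a (classical) symbol on the open cone `V`, holomorphic on the infinitesimal
wedge `W` of type `V`, with infra-exponential growth on wedges over relatively compact
subcones. -/
def IsSymbol {n : ℕ} (V W : Set (Pt n)) (f : Pt n → ℂ) : Prop :=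
  IsInfWedge V W ∧ DifferentiableOn ℂ f W ∧
  ∀ V' : Set (Pt n), IsOpen V' → IsCone V' → ConeRelCpt V' V →
    ∃ W' : Set (Pt n), W' ⊆ W ∧ IsInfWedge V' W' ∧
      ∀ h : ℝ, 0 < h → ∃ C : ℝ, 0 < C ∧
        ∀ p ∈ W', ‖f p‖ ≤ C * Real.exp (h * eucNorm p.2)

/-!
Let `u` be the Cauchy integral of `f` in `z` over the distinguished boundary of a polydisc lying
between `D'` and `D`. It is holomorphic in `(z, ζ)` and inherits the infra-exponential growth of
`f`, so it is the holomorphic representative, and everything rests on `g = f - u` being null.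

Contracting the torus towards `z` and differentiating the integral along the contraction, the
`∂f/∂z`-terms integrate to zero, and `g` is seen to be bounded by the supremum of `|∂f/∂z̄ᵢ|`. Hence
`g` decays exponentially. The derivatives of `g` grow infra-exponentially: those of `f` by
hypothesis, those of `u` by Cauchy's estimates. Landau's inequality `|G'|² ≲ |G| |G''|`, with an
exponentially small step, then turns decay of `G` and infra-exponential growth of `G''` into decay
of `G'`, and by induction every derivative of `g` decays exponentially.
-/

section Wirtinger

open Set
open scoped ContDiff

variable {n : ℕ}

/-- The `∂/∂zᵢ`-component (`b = false`) or `∂/∂z̄ᵢ`-component (`b = true`) of a real-linear form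
on `ℂⁿ`, for `a = (i, b)`. -/
def wirtingerCoeff (a : Fin n × Bool) : (Cn n →L[ℝ] ℂ) →L[ℝ] ℂ :=
  (1 / 2 : ℂ) • (ContinuousLinearMap.apply ℝ ℂ (Pi.single a.1 1) +
    (if a.2 then I else -I) • ContinuousLinearMap.apply ℝ ℂ (Pi.single a.1 I))

lemma wirtingerCoeff_apply (a : Fin n × Bool) (L : Cn n →L[ℝ] ℂ) :
    wirtingerCoeff a L =
      1 / 2 * (L (Pi.single a.1 1) + (if a.2 then I else -I) * L (Pi.single a.1 I)) :=
  rfl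

lemma apply_single_eq_wirtingerCoeff (L : Cn n →L[ℝ] ℂ) (i : Fin n) (c : ℂ) :
    L (Pi.single i c) =
      wirtingerCoeff (i, false) L * c + wirtingerCoeff (i, true) L * (starRingEnd ℂ) c := by
  have single_eq : (Pi.single i c : Cn n) =
      c.re • (Pi.single i 1 : Cn n) + c.im • (Pi.single i I : Cn n) := by
    rw [← Pi.single_smul, ← Pi.single_smul, ← Pi.single_add, real_smul, real_smul, mul_one,
      re_add_im]
  have conj_eq : (starRingEnd ℂ) c = c.re - c.im * I := by
    apply Complex.ext <;> simp
  rw [single_eq, map_add, map_smul, map_smul, conj_eq, real_smul, real_smul]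
  nth_rw 3 [← re_add_im c]
  simp only [wirtingerCoeff_apply, Bool.false_eq_true, if_false, if_true]
  linear_combination (L (Pi.single i I) * c.im) * I_mul_I

lemma apply_eq_sum_wirtingerCoeff (L : Cn n →L[ℝ] ℂ) (v : Cn n) :
    L v = ∑ i, (wirtingerCoeff (i, false) L * v i +
      wirtingerCoeff (i, true) L * (starRingEnd ℂ) (v i)) := by
  conv_lhs => rw [← Finset.univ_sum_single v, map_sum]
  exact Finset.sum_congr rfl fun i _ => apply_single_eq_wirtingerCoeff L i (v i)

/-- The Wirtinger derivative of `f` in the first variable attached to the letter `a`: `dz a.1 f` if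
`a.2 = false` and `dzbar a.1 f` if `a.2 = true`. Encoding both kinds as letters turns iterated
derivatives into words. -/
def wirtinger (a : Fin n × Bool) (f : Pt n → ℂ) (p : Pt n) : ℂ :=
  wirtingerCoeff a ((fderiv ℝ f p).comp (.inl ℝ (Cn n) (Cn n)))

lemma wirtinger_false (i : Fin n) : wirtinger (i, false) = dz i := by
  funext f p
  simp [wirtinger, wirtingerCoeff_apply, dz, sub_eq_add_neg]

lemma wirtinger_true (i : Fin n) : wirtinger (i, true) = dzbar i := by
  funext f p
  simp [wirtinger, wirtingerCoeff_apply, dzbar]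

lemma fderiv_single_eq_wirtinger (f : Pt n → ℂ) (p : Pt n) (i : Fin n) (c : ℂ) :
    fderiv ℝ f p (Pi.single i c, 0) =
      wirtinger (i, false) f p * c + wirtinger (i, true) f p * (starRingEnd ℂ) c :=
  apply_single_eq_wirtingerCoeff ((fderiv ℝ f p).comp (.inl ℝ (Cn n) (Cn n))) i c

lemma wirtinger_eq_slice {f : Pt n → ℂ} {p : Pt n} (hf : DifferentiableAt ℝ f p)
    (a : Fin n × Bool) :
    wirtinger a f p = wirtingerCoeff a (fderiv ℝ (fun z => f (z, p.2)) p.1) := by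
  have hslice : HasFDerivAt (fun z => f (z, p.2))
      ((fderiv ℝ f p).comp (.inl ℝ (Cn n) (Cn n))) p.1 :=
    hf.hasFDerivAt.comp p.1 (hasFDerivAt_prodMk_left p.1 p.2)
  rw [hslice.fderiv, wirtinger]

variable {U : Set (Pt n)} {f g : Pt n → ℂ}

lemma eqOn_wirtinger (hU : IsOpen U) (a : Fin n × Bool) (h : EqOn f g U) :
    EqOn (wirtinger a f) (wirtinger a g) U := fun p hp => by
  rw [wirtinger, wirtinger, (h.eventuallyEq_of_mem (hU.mem_nhds hp)).fderiv_eq]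

lemma contDiffOn_wirtinger (hU : IsOpen U) (a : Fin n × Bool) (hf : ContDiffOn ℝ ∞ f U) :
    ContDiffOn ℝ ∞ (wirtinger a f) U :=
  (wirtingerCoeff a).contDiff.comp_contDiffOn
    ((hf.fderiv_of_isOpen hU (by simp)).clm_comp contDiffOn_const)

lemma wirtinger_sub {p : Pt n} (hf : DifferentiableAt ℝ f p) (hg : DifferentiableAt ℝ g p)
    (a : Fin n × Bool) :
    wirtinger a (fun q => f q - g q) p = wirtinger a f p - wirtinger a g p := by
  simp only [wirtinger, fderiv_fun_sub hf hg, ContinuousLinearMap.sub_comp, map_sub]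

lemma dzbar_eq_zero {p : Pt n} (hf : DifferentiableAt ℂ f p) (i : Fin n) : dzbar i f p = 0 := by
  have smul_single : ((Pi.single i I : Cn n), (0 : Cn n)) = I • ((Pi.single i 1 : Cn n), 0) := by
    rw [Prod.smul_mk, ← Pi.single_smul, smul_eq_mul, mul_one, smul_zero]
  rw [dzbar, hf.fderiv_restrictScalars ℝ, smul_single]
  simp only [ContinuousLinearMap.coe_restrictScalars', map_smul, smul_eq_mul]
  linear_combination (1 / 2 * fderiv ℂ f p (Pi.single i 1, 0)) * I_mul_I

lemma hasDerivAt_slice_of_dzbar_eq_zero {z ζ : Cn n} {i : Fin n} {w : ℂ}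
    (hf : DifferentiableAt ℝ f (z + Pi.single i w, ζ))
    (hbar : dzbar i f (z + Pi.single i w, ζ) = 0) :
    HasDerivAt (fun w : ℂ => f (z + Pi.single i w, ζ)) (dz i f (z + Pi.single i w, ζ)) w := by
  have hpath : HasFDerivAt (fun w : ℂ => z + Pi.single i w)
      (ContinuousLinearMap.single ℝ (fun _ : Fin n => ℂ) i) w :=
    (ContinuousLinearMap.single ℝ (fun _ : Fin n => ℂ) i).hasFDerivAt.const_add z
  have hslice := hf.hasFDerivAt.comp w
    ((hasFDerivAt_prodMk_left (𝕜 := ℝ) (z + Pi.single i w) ζ).comp w hpath)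
  refine hasFDerivAt_of_restrictScalars ℝ hslice (ContinuousLinearMap.ext fun v => ?_)
  have happly := fderiv_single_eq_wirtinger f (z + Pi.single i w, ζ) i v
  rw [wirtinger_true, wirtinger_false, hbar, zero_mul, add_zero, mul_comm] at happly
  simpa using happly.symm

lemma fderiv_wirtinger_apply {p : Pt n} (hf : DifferentiableAt ℝ (fderiv ℝ f) p)
    (a : Fin n × Bool) (v : Pt n) :
    fderiv ℝ (wirtinger a f) p v =
      wirtingerCoeff a ((fderiv ℝ (fderiv ℝ f) p v).comp (.inl ℝ (Cn n) (Cn n))) := by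
  have hcomp := (wirtingerCoeff a).hasFDerivAt.comp p
    (hf.hasFDerivAt.clm_comp (hasFDerivAt_const (ContinuousLinearMap.inl ℝ (Cn n) (Cn n)) p))
  rw [show wirtinger a f = wirtingerCoeff a ∘ fun q => (fderiv ℝ f q).comp (.inl ℝ _ _) from rfl,
    hcomp.fderiv]
  simp

lemma wirtinger_comm (hU : IsOpen U) (a b : Fin n × Bool) (hf : ContDiffOn ℝ ∞ f U) :
    EqOn (wirtinger a (wirtinger b f)) (wirtinger b (wirtinger a f)) U := fun p hp => by
  have hfp : ContDiffAt ℝ ∞ f p := hf.contDiffAt (hU.mem_nhds hp)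
  have hsymm : IsSymmSndFDerivAt ℝ f p := hfp.isSymmSndFDerivAt (by
    simpa using WithTop.coe_le_coe.2 (le_top : (2 : ℕ∞) ≤ ⊤))
  have hdiff : DifferentiableAt ℝ (fderiv ℝ f) p :=
    (hfp.fderiv_right (m := ∞) (by simp)).differentiableAt (by simp)
  simp only [wirtinger.eq_1 _ (wirtinger _ f), wirtingerCoeff_apply,
    ContinuousLinearMap.comp_apply, ContinuousLinearMap.inl_apply, fderiv_wirtinger_apply hdiff]
  rw [hsymm.eq (Pi.single a.1 1, 0) (Pi.single b.1 1, 0),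
    hsymm.eq (Pi.single a.1 1, 0) (Pi.single b.1 I, 0),
    hsymm.eq (Pi.single a.1 I, 0) (Pi.single b.1 1, 0),
    hsymm.eq (Pi.single a.1 I, 0) (Pi.single b.1 I, 0)]
  ring

/-- The iterated Wirtinger derivative along a word of letters; the head is applied last. -/
def wirtingerWord (w : List (Fin n × Bool)) (f : Pt n → ℂ) : Pt n → ℂ :=
  w.foldr wirtinger f

lemma wirtingerWord_cons (a : Fin n × Bool) (w : List (Fin n × Bool)) (f : Pt n → ℂ) :
    wirtingerWord (a :: w) f = wirtinger a (wirtingerWord w f) :=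
  rfl

lemma wirtingerWord_append (w w' : List (Fin n × Bool)) (f : Pt n → ℂ) :
    wirtingerWord (w ++ w') f = wirtingerWord w (wirtingerWord w' f) :=
  List.foldr_append

lemma wirtingerWord_replicate (k : ℕ) (a : Fin n × Bool) (f : Pt n → ℂ) :
    wirtingerWord (List.replicate k a) f = (wirtinger a)^[k] f := by
  induction k with
  | zero => rfl
  | succ k ih => rw [List.replicate_succ, wirtingerWord_cons, ih, Function.iterate_succ_apply']

lemma contDiffOn_wirtingerWord (hU : IsOpen U) (w : List (Fin n × Bool))
    (hf : ContDiffOn ℝ ∞ f U) : ContDiffOn ℝ ∞ (wirtingerWord w f) U := by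
  induction w with
  | nil => exact hf
  | cons a w ih => exact contDiffOn_wirtinger hU a ih

lemma eqOn_wirtingerWord (hU : IsOpen U) (w : List (Fin n × Bool)) (h : EqOn f g U) :
    EqOn (wirtingerWord w f) (wirtingerWord w g) U := by
  induction w with
  | nil => exact h
  | cons a w ih => exact eqOn_wirtinger hU a ih

lemma wirtingerWord_sub (hU : IsOpen U) (w : List (Fin n × Bool)) (hf : ContDiffOn ℝ ∞ f U)
    (hg : ContDiffOn ℝ ∞ g U) :
    EqOn (wirtingerWord w (fun p => f p - g p))
      (fun p => wirtingerWord w f p - wirtingerWord w g p) U := by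
  induction w with
  | nil => exact fun _ _ => rfl
  | cons a w ih =>
    intro p hp
    have hdiff {u : Pt n → ℂ} (hu : ContDiffOn ℝ ∞ u U) :
        DifferentiableAt ℝ (wirtingerWord w u) p :=
      ((contDiffOn_wirtingerWord hU w hu).contDiffAt (hU.mem_nhds hp)).differentiableAt (by simp)
    rw [wirtingerWord_cons, eqOn_wirtinger hU a ih hp, wirtinger_sub (hdiff hf) (hdiff hg)]
    rfl

lemma wirtingerWord_perm (hU : IsOpen U) (hf : ContDiffOn ℝ ∞ f U)
    {w w' : List (Fin n × Bool)} (hw : w.Perm w') :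
    EqOn (wirtingerWord w f) (wirtingerWord w' f) U := by
  induction hw with
  | nil => exact fun _ _ => rfl
  | cons a _ ih => exact eqOn_wirtinger hU a ih
  | swap a b l => exact wirtinger_comm hU b a (contDiffOn_wirtingerWord hU l hf)
  | trans _ _ ih₁ ih₂ => exact ih₁.trans ih₂

lemma wirtingerWord_zero (w : List (Fin n × Bool)) : wirtingerWord w 0 = 0 := by
  induction w with
  | nil => rfl
  | cons a w ih =>
    rw [wirtingerWord_cons, ih]
    funext p
    simp [wirtinger]

lemma wirtingerWord_eqOn_zero (hU : IsOpen U) (hf : ContDiffOn ℝ ∞ f U) {a : Fin n × Bool}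
    (ha : EqOn (wirtinger a f) 0 U) {w : List (Fin n × Bool)} (haw : a ∈ w) :
    EqOn (wirtingerWord w f) 0 U := by
  have hperm : w.Perm (w.erase a ++ [a]) :=
    (List.perm_cons_erase haw).trans (List.perm_append_singleton _ _).symm
  have hword := eqOn_wirtingerWord hU (w.erase a) ha
  rw [wirtingerWord_zero] at hword
  exact (wirtingerWord_perm hU hf hperm).trans (wirtingerWord_append _ _ f ▸ hword)

/-- The word of `mixedDeriv α β`. -/
def mixedWord (α β : Fin n → ℕ) : List (Fin n × Bool) :=
  (List.ofFn fun i => List.replicate (α i) (i, false)).flatten ++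
    (List.ofFn fun i => List.replicate (β i) (i, true)).flatten

lemma foldr_iterate_wirtinger (f : Pt n → ℂ) (b : Bool) (α : Fin n → ℕ) (l : List (Fin n)) :
    (l.map fun i => (wirtinger (i, b))^[α i]).foldr (fun d g => d g) f =
      wirtingerWord (l.map fun i => List.replicate (α i) (i, b)).flatten f := by
  induction l with
  | nil => rfl
  | cons i l ih =>
    rw [List.map_cons, List.foldr_cons, List.map_cons, List.flatten_cons, wirtingerWord_append,
      wirtingerWord_replicate, ih]

lemma mixedDeriv_eq_wirtingerWord (α β : Fin n → ℕ) (f : Pt n → ℂ) :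
    mixedDeriv α β f = wirtingerWord (mixedWord α β) f := by
  simp only [mixedDeriv, mixedWord, List.foldr_append, wirtingerWord_append, List.ofFn_eq_map,
    ← wirtinger_false, ← wirtinger_true, foldr_iterate_wirtinger]

lemma mixedDeriv_zero_zero (f : Pt n → ℂ) : mixedDeriv 0 0 f = f := by
  simp [mixedDeriv_eq_wirtingerWord, mixedWord, wirtingerWord]

lemma count_flatten_ofFn_replicate (i : Fin n) (b b' : Bool) (α : Fin n → ℕ) :
    (List.ofFn fun j => List.replicate (α j) (j, b')).flatten.count (i, b) =
      if b' = b then α i else 0 := by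
  rw [List.count_flatten, List.map_ofFn, List.sum_ofFn]
  simp only [Function.comp_def, List.count_replicate]
  rw [Finset.sum_eq_single i (fun j _ hj => by simp [hj]) (by simp)]
  simp

lemma exists_perm_mixedWord (w : List (Fin n × Bool)) :
    ∃ α β : Fin n → ℕ, w.Perm (mixedWord α β) := by
  refine ⟨fun i => w.count (i, false), fun i => w.count (i, true), List.perm_iff_count.2 ?_⟩
  rintro ⟨i, b⟩
  rw [mixedWord, List.count_append, count_flatten_ofFn_replicate, count_flatten_ofFn_replicate]
  cases b <;> simp

lemma exists_mixedDeriv_eqOn_wirtingerWord (hU : IsOpen U) (hf : ContDiffOn ℝ ∞ f U)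
    (w : List (Fin n × Bool)) :
    ∃ α β : Fin n → ℕ, EqOn (wirtingerWord w f) (mixedDeriv α β f) U := by
  obtain ⟨α, β, hw⟩ := exists_perm_mixedWord w
  exact ⟨α, β, mixedDeriv_eq_wirtingerWord α β f ▸ wirtingerWord_perm hU hf hw⟩

end Wirtinger

section ParametricIntegral

open Set MeasureTheory
open scoped ContDiff Topology

universe u

variable {H : Type*} [NormedAddCommGroup H] [NormedSpace ℝ H] [MeasurableSpace H] [BorelSpace H]
  {μ : Measure H} [IsFiniteMeasureOnCompacts μ] {K : Set H}

lemma hasFDerivAt_setIntegral_of_contDiffOn {E G : Type*} [NormedAddCommGroup E] [NormedSpace ℝ E]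
    [NormedAddCommGroup G] [NormedSpace ℝ G] {O : Set (E × H)} {F : E × H → G} {x₀ : E}
    (hK : IsCompact K) (hO : IsOpen O) (hF : ContDiffOn ℝ 1 F O) (hx₀ : {x₀} ×ˢ K ⊆ O) :
    HasFDerivAt (fun x => ∫ θ in K, F (x, θ) ∂μ)
      (∫ θ in K, (fderiv ℝ F (x₀, θ)).comp (.inl ℝ E H) ∂μ) x₀ := by
  set F' : E × H → E →L[ℝ] G := fun p => (fderiv ℝ F p).comp (.inl ℝ E H)
  have hF' : ContinuousOn F' O :=
    (hF.continuousOn_fderiv_of_isOpen hO le_rfl).clm_comp continuousOn_const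
  obtain ⟨C, hC⟩ := (isCompact_singleton.prod hK).exists_bound_of_continuousOn (hF'.mono hx₀)
  -- A tube around `{x₀} × K` on which the derivative is bounded gives the domination.
  have hO' : IsOpen (O ∩ F' ⁻¹' Metric.ball 0 (C + 1)) :=
    hF'.isOpen_inter_preimage hO Metric.isOpen_ball
  obtain ⟨A, B, hA, -, hxA, hKB, hAB⟩ := generalized_tube_lemma isCompact_singleton hK hO'
    fun p hp => ⟨hx₀ hp, by simpa using (hC p hp).trans_lt (lt_add_one C)⟩
  have hmem {x : E} (hx : x ∈ A) {θ : H} (hθ : θ ∈ K) : (x, θ) ∈ O := (hAB ⟨hx, hKB hθ⟩).1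
  have hx₀A : x₀ ∈ A := hxA rfl
  have hFslice {x : E} (hx : x ∈ A) : ContinuousOn (fun θ => F (x, θ)) K :=
    hF.continuousOn.comp (Continuous.prodMk_right x).continuousOn fun _ => hmem hx
  have hF'slice : ContinuousOn (fun θ => F' (x₀, θ)) K :=
    hF'.comp (Continuous.prodMk_right x₀).continuousOn fun _ => hmem hx₀A
  have : IsFiniteMeasure (μ.restrict K) := isFiniteMeasure_restrict.2 hK.measure_ne_top
  refine hasFDerivAt_integral_of_dominated_of_fderiv_le (bound := fun _ => C + 1)
    (F' := fun x θ => F' (x, θ)) (hA.mem_nhds hx₀A) ?_ ?_ ?_ ?_ (integrable_const _) ?_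
  · filter_upwards [hA.mem_nhds hx₀A] with x hx
    exact (hFslice hx).aestronglyMeasurable_of_isCompact hK hK.measurableSet
  · exact (hFslice hx₀A).integrableOn_compact hK
  · exact hF'slice.aestronglyMeasurable_of_isCompact hK hK.measurableSet
  · filter_upwards [ae_restrict_mem hK.measurableSet] with θ hθ x hx
    exact (mem_ball_zero_iff.1 (hAB ⟨hx, hKB hθ⟩).2).le
  · filter_upwards [ae_restrict_mem hK.measurableSet] with θ hθ x hx
    have hdiff : DifferentiableAt ℝ F (x, θ) :=
      (hF.contDiffAt (hO.mem_nhds (hmem hx hθ))).differentiableAt (by simp)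
    exact hdiff.hasFDerivAt.comp x (hasFDerivAt_prodMk_left x θ)

lemma hasDerivAt_setIntegral_of_contDiffOn {G : Type*} [NormedAddCommGroup G] [NormedSpace ℝ G]
    {O : Set (ℝ × H)} {F : ℝ × H → G} {t₀ : ℝ} (hK : IsCompact K) (hO : IsOpen O)
    (hF : ContDiffOn ℝ 1 F O) (ht₀ : {t₀} ×ˢ K ⊆ O) :
    HasDerivAt (fun t => ∫ θ in K, F (t, θ) ∂μ) (∫ θ in K, deriv (fun t => F (t, θ)) t₀ ∂μ) t₀ := by
  have hF' : ContinuousOn (fun θ => (fderiv ℝ F (t₀, θ)).comp (.inl ℝ ℝ H)) K :=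
    ((hF.continuousOn_fderiv_of_isOpen hO le_rfl).clm_comp continuousOn_const).comp
      (Continuous.prodMk_right t₀).continuousOn fun _ hθ => ht₀ (mk_mem_prod rfl hθ)
  have fderiv_eq {θ : H} (hθ : θ ∈ K) :
      (fderiv ℝ F (t₀, θ)).comp (.inl ℝ ℝ H) 1 = deriv (fun t => F (t, θ)) t₀ := by
    have hdiff : DifferentiableAt ℝ F (t₀, θ) :=
      (hF.contDiffAt (hO.mem_nhds (ht₀ (mk_mem_prod rfl hθ)))).differentiableAt (by simp)
    exact (hdiff.hasFDerivAt.comp t₀ (hasFDerivAt_prodMk_left t₀ θ)).hasDerivAt.deriv.symm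
  rw [← setIntegral_congr_fun hK.measurableSet fun θ hθ => fderiv_eq hθ,
    ← ContinuousLinearMap.integral_apply (hF'.integrableOn_compact hK)]
  exact (hasFDerivAt_setIntegral_of_contDiffOn hK hO hF ht₀).hasDerivAt

lemma contDiffOn_setIntegral_nat {E : Type u} [NormedAddCommGroup E] [NormedSpace ℝ E]
    {O : Set (E × H)} {A : Set E} (hK : IsCompact K) (hO : IsOpen O) (hA : IsOpen A)
    (hAK : A ×ˢ K ⊆ O) (m : ℕ) :
    ∀ {G : Type u} [NormedAddCommGroup G] [NormedSpace ℝ G] {F : E × H → G},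
      ContDiffOn ℝ ∞ F O → ContDiffOn ℝ m (fun x => ∫ θ in K, F (x, θ) ∂μ) A := by
  have hasFDerivAt_integral {G : Type u} [NormedAddCommGroup G] [NormedSpace ℝ G] {F : E × H → G}
      (hF : ContDiffOn ℝ ∞ F O) {x : E} (hx : x ∈ A) :=
    hasFDerivAt_setIntegral_of_contDiffOn (μ := μ) hK hO (hF.of_le (by exact_mod_cast le_top))
      ((prod_mono (singleton_subset_iff.2 hx) subset_rfl).trans hAK)
  induction m with
  | zero =>
    exact fun hF => contDiffOn_zero.2 fun x hx =>
      (hasFDerivAt_integral hF hx).continuousAt.continuousWithinAt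
  | succ m ih =>
    intro G _ _ F hF
    push_cast
    rw [contDiffOn_succ_iff_fderiv_of_isOpen hA]
    refine ⟨fun x hx => (hasFDerivAt_integral hF hx).differentiableAt.differentiableWithinAt,
      by simp, ?_⟩
    have hF' : ContDiffOn ℝ ∞ (fun p => (fderiv ℝ F p).comp (.inl ℝ E H)) O :=
      (hF.fderiv_of_isOpen hO (by simp)).clm_comp contDiffOn_const
    exact (ih hF').congr fun x hx => (hasFDerivAt_integral hF hx).fderiv

lemma contDiffOn_setIntegral {E G : Type u} [NormedAddCommGroup E] [NormedSpace ℝ E]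
    [NormedAddCommGroup G] [NormedSpace ℝ G] {O : Set (E × H)} {A : Set E} {F : E × H → G}
    (hK : IsCompact K) (hO : IsOpen O) (hA : IsOpen A) (hAK : A ×ˢ K ⊆ O)
    (hF : ContDiffOn ℝ ∞ F O) :
    ContDiffOn ℝ ∞ (fun x => ∫ θ in K, F (x, θ) ∂μ) A :=
  contDiffOn_infty.2 fun m => contDiffOn_setIntegral_nat hK hO hA hAK m hF

lemma differentiableAt_setIntegral_of_contDiffOn {E G : Type*} [NormedAddCommGroup E]
    [NormedSpace ℂ E] [NormedAddCommGroup G] [NormedSpace ℂ G] [CompleteSpace G]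
    {O : Set (E × H)} {F : E × H → G} {x₀ : E}
    (hK : IsCompact K) (hO : IsOpen O) (hF : ContDiffOn ℝ 1 F O) (hx₀ : {x₀} ×ˢ K ⊆ O)
    (hF' : ∀ θ ∈ K, DifferentiableAt ℂ (fun x => F (x, θ)) x₀) :
    DifferentiableAt ℂ (fun x => ∫ θ in K, F (x, θ) ∂μ) x₀ := by
  have fderiv_eq {θ : H} (hθ : θ ∈ K) : (fderiv ℝ F (x₀, θ)).comp (.inl ℝ E H) =
      (fderiv ℂ (fun x => F (x, θ)) x₀).restrictScalars ℝ := by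
    have hdiff : DifferentiableAt ℝ F (x₀, θ) :=
      (hF.contDiffAt (hO.mem_nhds (hx₀ (mk_mem_prod rfl hθ)))).differentiableAt (by simp)
    exact (hdiff.hasFDerivAt.comp x₀ (hasFDerivAt_prodMk_left x₀ θ)).unique
      ((hF' θ hθ).hasFDerivAt.restrictScalars ℝ)
  have integral_eq : ∫ θ in K, (fderiv ℝ F (x₀, θ)).comp (.inl ℝ E H) ∂μ =
      (∫ θ in K, fderiv ℂ (fun x => F (x, θ)) x₀ ∂μ).restrictScalars ℝ := by
    rw [setIntegral_congr_fun hK.measurableSet fun θ hθ => fderiv_eq hθ]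
    exact (ContinuousLinearMap.restrictScalarsIsometry ℂ E G ℝ ℝ).integral_comp_comm _
  exact (hasFDerivAt_of_restrictScalars ℝ
    (hasFDerivAt_setIntegral_of_contDiffOn hK hO hF hx₀) integral_eq.symm).differentiableAt

end ParametricIntegral

section CauchyIntegral

open Set MeasureTheory
open scoped ContDiff Real

variable {n : ℕ}

/-- The open polydisc in `ℂⁿ` centred at the origin with polyradius `R`. -/
def polydisc (R : Fin n → ℝ) : Set (Cn n) := {z | ∀ i, ‖z i‖ < R i}

/-- The closed polydisc in `ℂⁿ` centred at the origin with polyradius `R`. -/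
def closedPolydisc (R : Fin n → ℝ) : Set (Cn n) := {z | ∀ i, ‖z i‖ ≤ R i}

lemma polydisc_eq_pi (R : Fin n → ℝ) : polydisc R = univ.pi fun i => Metric.ball 0 (R i) := by
  ext z
  simp [polydisc]

lemma closedPolydisc_eq_pi (R : Fin n → ℝ) :
    closedPolydisc R = univ.pi fun i => Metric.closedBall 0 (R i) := by
  ext z
  simp [closedPolydisc]

lemma isOpen_polydisc (R : Fin n → ℝ) : IsOpen (polydisc R) := by
  rw [polydisc_eq_pi]
  exact isOpen_set_pi finite_univ fun i _ => Metric.isOpen_ball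

lemma isCompact_closedPolydisc (R : Fin n → ℝ) : IsCompact (closedPolydisc R) := by
  rw [closedPolydisc_eq_pi]
  exact isCompact_univ_pi fun i => isCompact_closedBall 0 (R i)

lemma convex_closedPolydisc (R : Fin n → ℝ) : Convex ℝ (closedPolydisc R) := by
  rw [closedPolydisc_eq_pi]
  exact convex_pi fun i _ => convex_closedBall 0 (R i)

lemma polydisc_subset_closedPolydisc (R : Fin n → ℝ) : polydisc R ⊆ closedPolydisc R :=
  fun _ hz i => (hz i).le

lemma closedPolydisc_subset_polydisc {R R' : Fin n → ℝ} (h : ∀ i, R i < R' i) :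
    closedPolydisc R ⊆ polydisc R' :=
  fun _ hz i => (hz i).trans_lt (h i)

lemma radius_pos_of_mem_polydisc {R : Fin n → ℝ} {z : Cn n} (hz : z ∈ polydisc R) (i : Fin n) :
    0 < R i :=
  (norm_nonneg (z i)).trans_lt (hz i)

/-- The parametrization of the distinguished boundary `{w | ∀ i, ‖wᵢ‖ = Rᵢ}` of a polydisc by
angles measured in full turns, so that the parameter box `[0,1]ⁿ` has volume one. -/
def torusPoint (R : Fin n → ℝ) (θ : Fin n → ℝ) : Cn n := fun i => circleMap 0 (R i) (2 * π * θ i)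

lemma norm_torusPoint {R : Fin n → ℝ} (hR : ∀ i, 0 ≤ R i) (θ : Fin n → ℝ) (i : Fin n) :
    ‖torusPoint R θ i‖ = R i := by
  rw [torusPoint, norm_circleMap_zero, abs_of_nonneg (hR i)]

lemma torusPoint_mem_closedPolydisc {R : Fin n → ℝ} (hR : ∀ i, 0 ≤ R i) (θ : Fin n → ℝ) :
    torusPoint R θ ∈ closedPolydisc R :=
  fun i => (norm_torusPoint hR θ i).le

lemma torusPoint_sub_ne_zero {R : Fin n → ℝ} {z : Cn n} (hz : z ∈ polydisc R) (θ : Fin n → ℝ)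
    (i : Fin n) : torusPoint R θ i - z i ≠ 0 := fun h => by
  have hnorm := norm_torusPoint (fun j => (radius_pos_of_mem_polydisc hz j).le) θ i
  rw [sub_eq_zero.1 h] at hnorm
  exact (hz i).ne hnorm

lemma contDiff_torusPoint (R : Fin n → ℝ) : ContDiff ℝ ∞ (torusPoint R) :=
  contDiff_pi.2 fun i => (contDiff_circleMap 0 (R i)).comp
    (contDiff_const.mul (contDiff_apply ℝ ℝ i))

/-- The Cauchy kernel of a polydisc with respect to the normalized measure `dθ` of the torus:
`∏ i, wᵢ / (wᵢ - zᵢ)` at `w = torusPoint R θ`. -/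
def cauchyKernel (R : Fin n → ℝ) (z : Cn n) (θ : Fin n → ℝ) : ℂ :=
  ∏ i, torusPoint R θ i / (torusPoint R θ i - z i)

lemma contDiffOn_cauchyKernel (R : Fin n → ℝ) :
    ContDiffOn ℝ ∞ (fun q : Cn n × (Fin n → ℝ) => cauchyKernel R q.1 q.2)
      (polydisc R ×ˢ univ) := by
  refine contDiffOn_prod fun i _ => ?_
  have htorus : ContDiff ℝ ∞ fun q : Cn n × (Fin n → ℝ) => torusPoint R q.2 i :=
    (contDiff_apply ℝ ℂ i).comp ((contDiff_torusPoint R).comp contDiff_snd)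
  have hcoord : ContDiff ℝ ∞ fun q : Cn n × (Fin n → ℝ) => q.1 i :=
    (contDiff_apply ℝ ℂ i).comp contDiff_fst
  simp only [div_eq_mul_inv]
  exact htorus.contDiffOn.mul ((htorus.sub hcoord).contDiffOn.inv fun q hq =>
    torusPoint_sub_ne_zero hq.1 q.2 i)

lemma differentiableAt_cauchyKernel {R : Fin n → ℝ} {z : Cn n} (hz : z ∈ polydisc R)
    (θ : Fin n → ℝ) : DifferentiableAt ℂ (fun w => cauchyKernel R w θ) z := by
  have hfactor (i : Fin n) :
      DifferentiableAt ℂ (fun w : Cn n => torusPoint R θ i / (torusPoint R θ i - w i)) z := by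
    simp only [div_eq_mul_inv]
    exact (differentiableAt_const _).mul
      (DifferentiableAt.inv (by fun_prop) (torusPoint_sub_ne_zero hz θ i))
  exact (HasFDerivAt.finsetProd fun i _ => (hfactor i).hasFDerivAt).differentiableAt

lemma exists_norm_cauchyKernel_le {R : Fin n → ℝ} {Z : Set (Cn n)} (hZ : IsCompact Z)
    (hZR : Z ⊆ polydisc R) :
    ∃ B, ∀ z ∈ Z, ∀ θ ∈ Icc (0 : Fin n → ℝ) 1, ‖cauchyKernel R z θ‖ ≤ B := by
  obtain ⟨B, hB⟩ := (hZ.prod (isCompact_Icc (a := (0 : Fin n → ℝ)) (b := 1))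
    ).exists_bound_of_continuousOn
      ((contDiffOn_cauchyKernel R).continuousOn.mono (prod_mono hZR (subset_univ _)))
  exact ⟨B, fun z hz θ hθ => hB (z, θ) ⟨hz, hθ⟩⟩

lemma integral_circleMap_div_sub {R : ℝ} {w : ℂ} (hw : ‖w‖ < R) :
    ∫ t in (0 : ℝ)..1, circleMap 0 R (2 * π * t) / (circleMap 0 R (2 * π * t) - w) = 1 := by
  have hcauchy : (∮ ξ in C((0 : ℂ), R), (ξ - w)⁻¹) = 2 * π * I :=
    circleIntegral.integral_sub_inv_of_mem_ball (by simpa using hw)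
  have hsubst := intervalIntegral.integral_comp_mul_left (a := 0) (b := 1)
    (fun θ : ℝ => deriv (circleMap 0 R) θ • (circleMap 0 R θ - w)⁻¹) (c := 2 * π) (by positivity)
  rw [circleIntegral] at hcauchy
  rw [mul_zero, mul_one, hcauchy] at hsubst
  have integrand_eq (t : ℝ) :
      deriv (circleMap 0 R) (2 * π * t) • (circleMap 0 R (2 * π * t) - w)⁻¹ =
        I * (circleMap 0 R (2 * π * t) / (circleMap 0 R (2 * π * t) - w)) := by
    rw [deriv_circleMap, smul_eq_mul]
    ring
  simp only [integrand_eq, intervalIntegral.integral_const_mul] at hsubst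
  refine mul_left_cancel₀ I_ne_zero (hsubst.trans ?_)
  have hpi : (π : ℂ) ≠ 0 := ofReal_ne_zero.2 Real.pi_ne_zero
  rw [real_smul]
  push_cast
  field_simp

lemma integral_cauchyKernel {R : Fin n → ℝ} {z : Cn n} (hz : z ∈ polydisc R) :
    ∫ θ in Icc (0 : Fin n → ℝ) 1, cauchyKernel R z θ = 1 := by
  have hbox : Icc (0 : Fin n → ℝ) 1 = univ.pi fun _ => Icc (0 : ℝ) 1 := (pi_univ_Icc 0 1).symm
  rw [hbox, volume_pi, Measure.restrict_pi_pi]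
  refine (integral_fintype_prod_eq_prod (𝕜 := ℂ) fun i (t : ℝ) =>
    circleMap 0 (R i) (2 * π * t) / (circleMap 0 (R i) (2 * π * t) - z i)).trans
      (Finset.prod_eq_one fun i _ => ?_)
  rw [integral_Icc_eq_integral_Ioc, ← intervalIntegral.integral_of_le zero_le_one]
  exact integral_circleMap_div_sub (hz i)

lemma norm_integral_unitBox_le {F : (Fin n → ℝ) → ℂ} {M : ℝ}
    (h : ∀ θ ∈ Icc (0 : Fin n → ℝ) 1, ‖F θ‖ ≤ M) : ‖∫ θ in Icc (0 : Fin n → ℝ) 1, F θ‖ ≤ M := by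
  have hvol : volume.real (Icc (0 : Fin n → ℝ) 1) = 1 := by
    simp [Measure.real, Real.volume_Icc_pi]
  simpa [hvol] using norm_setIntegral_le_of_norm_le_const
    (isCompact_Icc.measure_lt_top (μ := volume)) h

/-- The Cauchy integral of `f` in the first variable over the distinguished boundary of the polydisc
with polyradius `R`; the second variable is a parameter. -/
def cauchyIntegral (R : Fin n → ℝ) (f : Pt n → ℂ) (p : Pt n) : ℂ :=
  ∫ θ in Icc (0 : Fin n → ℝ) 1, f (torusPoint R θ, p.2) * cauchyKernel R p.1 θ

variable {R : Fin n → ℝ} {f : Pt n → ℂ} {X : Set (Pt n)} {S : Set (Cn n)}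

lemma norm_cauchyIntegral_le (hR : ∀ i, 0 ≤ R i) {p : Pt n} {M B : ℝ}
    (hM : ∀ w ∈ closedPolydisc R, ‖f (w, p.2)‖ ≤ M)
    (hB : ∀ θ ∈ Icc (0 : Fin n → ℝ) 1, ‖cauchyKernel R p.1 θ‖ ≤ B) :
    ‖cauchyIntegral R f p‖ ≤ M * B :=
  norm_integral_unitBox_le fun θ hθ => by
    have hMθ := hM _ (torusPoint_mem_closedPolydisc hR θ)
    rw [norm_mul]
    exact mul_le_mul hMθ (hB θ hθ) (norm_nonneg _) ((norm_nonneg _).trans hMθ)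

lemma contDiffOn_cauchyIntegrand (hR : ∀ i, 0 ≤ R i) (hf : ContDiffOn ℝ ∞ f X)
    (hX : closedPolydisc R ×ˢ S ⊆ X) :
    ContDiffOn ℝ ∞ (fun q : Pt n × (Fin n → ℝ) =>
      f (torusPoint R q.2, q.1.2) * cauchyKernel R q.1.1 q.2) ((polydisc R ×ˢ S) ×ˢ univ) := by
  have hpoint : ContDiff ℝ ∞ fun q : Pt n × (Fin n → ℝ) => (torusPoint R q.2, q.1.2) :=
    ((contDiff_torusPoint R).comp contDiff_snd).prodMk (contDiff_snd.comp contDiff_fst)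
  have hparam : ContDiff ℝ ∞ fun q : Pt n × (Fin n → ℝ) => (q.1.1, q.2) :=
    (contDiff_fst.comp contDiff_fst).prodMk contDiff_snd
  have hvalue : ContDiffOn ℝ ∞ (fun q : Pt n × (Fin n → ℝ) => f (torusPoint R q.2, q.1.2))
      ((polydisc R ×ˢ S) ×ˢ univ) :=
    hf.comp hpoint.contDiffOn fun q hq =>
      hX (mk_mem_prod (torusPoint_mem_closedPolydisc hR q.2) hq.1.2)
  have hkernel := (contDiffOn_cauchyKernel R).comp (s := (polydisc R ×ˢ S) ×ˢ univ)
    hparam.contDiffOn fun q hq => ⟨hq.1.1, hq.2⟩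
  exact hvalue.mul hkernel

lemma contDiffOn_cauchyIntegral (hR : ∀ i, 0 ≤ R i) (hS : IsOpen S) (hf : ContDiffOn ℝ ∞ f X)
    (hX : closedPolydisc R ×ˢ S ⊆ X) : ContDiffOn ℝ ∞ (cauchyIntegral R f) (polydisc R ×ˢ S) :=
  have hA : IsOpen (polydisc R ×ˢ S) := (isOpen_polydisc R).prod hS
  contDiffOn_setIntegral isCompact_Icc (hA.prod isOpen_univ) hA (prod_mono_right (subset_univ _))
    (contDiffOn_cauchyIntegrand hR hf hX)

lemma differentiableOn_cauchyIntegral (hR : ∀ i, 0 ≤ R i) (hS : IsOpen S)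
    (hf : ContDiffOn ℝ ∞ f X) (hX : closedPolydisc R ×ˢ S ⊆ X)
    (hol : ∀ w ∈ closedPolydisc R, ∀ ζ ∈ S, DifferentiableAt ℂ (fun ζ => f (w, ζ)) ζ) :
    DifferentiableOn ℂ (cauchyIntegral R f) (polydisc R ×ˢ S) := fun p hp => by
  have hA : IsOpen (polydisc R ×ˢ S) := (isOpen_polydisc R).prod hS
  refine (differentiableAt_setIntegral_of_contDiffOn isCompact_Icc (hA.prod isOpen_univ)
    ((contDiffOn_cauchyIntegrand hR hf hX).of_le (by exact_mod_cast le_top))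
    (prod_mono (singleton_subset_iff.2 hp) (subset_univ _)) fun θ _ => ?_).differentiableWithinAt
  exact ((hol _ (torusPoint_mem_closedPolydisc hR θ) p.2 hp.2).comp p differentiableAt_snd).mul
    ((differentiableAt_cauchyKernel hp.1 θ).comp p differentiableAt_fst)

end CauchyIntegral

section Pompeiu

open Set MeasureTheory
open scoped ContDiff Real

variable {n : ℕ}

lemma integral_unitBox_divergence_eq_zero (F : Fin n → (Fin n → ℝ) → ℂ)
    (hF : ∀ k, ContDiff ℝ 1 (F k))
    (hper : ∀ k θ, F k (Function.update θ k 1) = F k (Function.update θ k 0)) :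
    ∫ θ in Icc (0 : Fin n → ℝ) 1, ∑ k, fderiv ℝ (F k) θ (Pi.single k 1) = 0 := by
  cases n with
  | zero => simp
  | succ m =>
    have hcont : Continuous fun θ => ∑ k, fderiv ℝ (F k) θ (Pi.single k 1) :=
      continuous_finsetSum _ fun k _ =>
        ((hF k).continuous_fderiv (by simp)).clm_apply continuous_const
    rw [integral_divergence_of_hasFDerivAt_off_countable' 0 1 zero_le_one F
      (fun k => fderiv ℝ (F k)) ∅ countable_empty (fun k => (hF k).continuous.continuousOn)
      (fun θ _ k => ((hF k).differentiable (by simp) θ).hasFDerivAt) hcont.integrableOn_Icc]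
    refine Finset.sum_eq_zero fun k _ => sub_eq_zero.2 (integral_congr_ae (.of_forall fun x => ?_))
    simpa using hper k (k.insertNth (0 : ℝ) x)

lemma hasLineDerivAt_torusPoint (R θ : Fin n → ℝ) (k : Fin n) :
    HasLineDerivAt ℝ (torusPoint R) ((2 * π) • Pi.single k (I * torusPoint R θ k)) θ
      (Pi.single k 1) := by
  refine hasDerivAt_pi.2 fun i => ?_
  rcases eq_or_ne i k with rfl | hik
  · have hangle : HasDerivAt
        (fun t : ℝ => 2 * π * (θ + t • (Pi.single i 1 : Fin n → ℝ)) i) (2 * π) 0 := by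
      simpa using ((hasDerivAt_id (0 : ℝ)).const_add (θ i)).const_mul (2 * π)
    have hcircle := (hasDerivAt_circleMap 0 (R i)
      (2 * π * (θ + (0 : ℝ) • (Pi.single i 1 : Fin n → ℝ)) i)).scomp (0 : ℝ) hangle
    simpa [torusPoint, Function.comp_def, mul_comm I] using hcircle
  · simpa [torusPoint, hik] using hasDerivAt_const (0 : ℝ) (torusPoint R θ i)

lemma torusPoint_update_one (R θ : Fin n → ℝ) (k : Fin n) :
    torusPoint R (Function.update θ k 1) = torusPoint R (Function.update θ k 0) := by
  funext i
  rcases eq_or_ne i k with rfl | hik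
  · simpa [torusPoint] using periodic_circleMap 0 (R i) 0
  · simp [torusPoint, hik]

/-- The product of the factors of the Cauchy kernel other than the `k`-th; unlike `cauchyKernel`, it
does not depend on `θ k`. -/
def cauchyKernelErase (R : Fin n → ℝ) (z : Cn n) (k : Fin n) (θ : Fin n → ℝ) : ℂ :=
  ∏ i ∈ Finset.univ.erase k, torusPoint R θ i / (torusPoint R θ i - z i)

lemma cauchyKernelErase_add_smul_single (R : Fin n → ℝ) (z : Cn n) (k : Fin n) (θ : Fin n → ℝ)
    (t : ℝ) : cauchyKernelErase R z k (θ + t • Pi.single k 1) = cauchyKernelErase R z k θ :=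
  Finset.prod_congr rfl fun i hi => by simp [torusPoint, Finset.ne_of_mem_erase hi]

variable {R : Fin n → ℝ} {z : Cn n}

lemma torusPoint_mul_cauchyKernelErase (hz : z ∈ polydisc R) (k : Fin n) (θ : Fin n → ℝ) :
    torusPoint R θ k * cauchyKernelErase R z k θ =
      (torusPoint R θ k - z k) * cauchyKernel R z θ := by
  have hne := torusPoint_sub_ne_zero hz θ k
  rw [cauchyKernel, ← Finset.mul_prod_erase _ _ (Finset.mem_univ k), ← cauchyKernelErase]
  field_simp

lemma contDiff_torusPoint_div_sub (hz : z ∈ polydisc R) (i : Fin n) :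
    ContDiff ℝ ∞ fun θ => torusPoint R θ i / (torusPoint R θ i - z i) := by
  have htorus : ContDiff ℝ ∞ fun θ => torusPoint R θ i :=
    (contDiff_apply ℝ ℂ i).comp (contDiff_torusPoint R)
  simp only [div_eq_mul_inv]
  exact htorus.mul ((htorus.sub contDiff_const).inv fun θ => torusPoint_sub_ne_zero hz θ i)

lemma contDiff_cauchyKernel (hz : z ∈ polydisc R) : ContDiff ℝ ∞ (cauchyKernel R z) :=
  contDiff_prod fun i _ => contDiff_torusPoint_div_sub hz i

lemma contDiff_cauchyKernelErase (hz : z ∈ polydisc R) (k : Fin n) :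
    ContDiff ℝ ∞ (cauchyKernelErase R z k) :=
  contDiff_prod fun i _ => contDiff_torusPoint_div_sub hz i

-- The `∂/∂zₖ`-components of `L` cancel since `(wₖ - zₖ) * cauchyKernel = wₖ * cauchyKernelErase`.
lemma apply_mul_cauchyKernel_add_sum (hz : z ∈ polydisc R) (L : Cn n →L[ℝ] ℂ) (θ : Fin n → ℝ) :
    L (z - torusPoint R θ) * cauchyKernel R z θ +
        I⁻¹ * ∑ k, L (Pi.single k (I * torusPoint R θ k)) * cauchyKernelErase R z k θ =
      ∑ k, wirtingerCoeff (k, true) L *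
        ((starRingEnd ℂ) (z k - torusPoint R θ k) * cauchyKernel R z θ -
          (starRingEnd ℂ) (torusPoint R θ k) * cauchyKernelErase R z k θ) := by
  rw [apply_eq_sum_wirtingerCoeff L, Finset.sum_mul, Finset.mul_sum, ← Finset.sum_add_distrib]
  refine Finset.sum_congr rfl fun k _ => ?_
  rw [apply_single_eq_wirtingerCoeff, map_mul, conj_I, Pi.sub_apply]
  field_simp
  linear_combination (wirtingerCoeff (k, false) L) * torusPoint_mul_cauchyKernelErase hz k θ

lemma norm_sum_mul_cauchyKernel_sub_le (hz : z ∈ polydisc R) {θ : Fin n → ℝ} {b : Fin n → ℂ}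
    {N B : ℝ} (hb : ∀ k, ‖b k‖ ≤ N) (hB : ‖cauchyKernel R z θ‖ ≤ B) :
    ‖∑ k, b k * ((starRingEnd ℂ) (z k - torusPoint R θ k) * cauchyKernel R z θ -
        (starRingEnd ℂ) (torusPoint R θ k) * cauchyKernelErase R z k θ)‖ ≤
      N * B * ∑ k, 4 * R k := by
  rw [Finset.mul_sum]
  refine (norm_sum_le _ _).trans (Finset.sum_le_sum fun k _ => ?_)
  have hnorm := norm_torusPoint (fun i => (radius_pos_of_mem_polydisc hz i).le) θ
  have hdist : ‖z k - torusPoint R θ k‖ ≤ 2 * R k := by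
    linarith [norm_sub_le (z k) (torusPoint R θ k), hz k, hnorm k]
  have herase : ‖torusPoint R θ k‖ * ‖cauchyKernelErase R z k θ‖ =
      ‖z k - torusPoint R θ k‖ * ‖cauchyKernel R z θ‖ := by
    rw [← norm_mul, torusPoint_mul_cauchyKernelErase hz, norm_mul, norm_sub_rev]
  calc ‖b k * ((starRingEnd ℂ) (z k - torusPoint R θ k) * cauchyKernel R z θ -
        (starRingEnd ℂ) (torusPoint R θ k) * cauchyKernelErase R z k θ)‖
      ≤ ‖b k‖ * (‖z k - torusPoint R θ k‖ * ‖cauchyKernel R z θ‖ +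
          ‖torusPoint R θ k‖ * ‖cauchyKernelErase R z k θ‖) := by
        rw [norm_mul]
        gcongr
        refine (norm_sub_le _ _).trans_eq ?_
        rw [norm_mul, norm_mul, RCLike.norm_conj, RCLike.norm_conj]
    _ = ‖b k‖ * (2 * (‖z k - torusPoint R θ k‖ * ‖cauchyKernel R z θ‖)) := by
        rw [herase]
        ring
    _ ≤ N * (2 * (2 * R k * B)) := by
        have := radius_pos_of_mem_polydisc hz k
        have := (norm_nonneg _).trans (hb k)
        gcongr
        exact hb k
    _ = N * B * (4 * R k) := by ring

variable {φ : Cn n → ℂ} {Y : Set (Cn n)} {s : ℝ}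

lemma lineMap_torusPoint_mem_closedPolydisc (hz : z ∈ polydisc R) (hs : s ∈ Icc (0 : ℝ) 1)
    (θ : Fin n → ℝ) : AffineMap.lineMap (torusPoint R θ) z s ∈ closedPolydisc R :=
  (convex_closedPolydisc R).lineMap_mem
    (torusPoint_mem_closedPolydisc (fun i => (radius_pos_of_mem_polydisc hz i).le) θ)
    (polydisc_subset_closedPolydisc R hz) hs

lemma contDiff_lineMap_torusPoint (R : Fin n → ℝ) (z : Cn n) :
    ContDiff ℝ ∞ fun q : ℝ × (Fin n → ℝ) =>
      (AffineMap.lineMap (torusPoint R q.2) z q.1 : Cn n) := by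
  have htorus : ContDiff ℝ ∞ fun q : ℝ × (Fin n → ℝ) => torusPoint R q.2 :=
    (contDiff_torusPoint R).comp contDiff_snd
  simp only [AffineMap.lineMap_apply_module]
  exact ((contDiff_const.sub contDiff_fst).smul htorus).add (contDiff_fst.smul contDiff_const)

lemma contDiff_lineMap_torusPoint_right (R : Fin n → ℝ) (z : Cn n) (s : ℝ) :
    ContDiff ℝ ∞ fun θ => (AffineMap.lineMap (torusPoint R θ) z s : Cn n) := by
  simp only [AffineMap.lineMap_apply_module]
  exact ((contDiff_torusPoint R).const_smul (1 - s)).add contDiff_const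

lemma fderiv_comp_lineMap_mul_cauchyKernelErase (hY : IsOpen Y) (hφ : ContDiffOn ℝ 1 φ Y)
    (hYR : closedPolydisc R ⊆ Y) (hz : z ∈ polydisc R) (hs : s ∈ Icc (0 : ℝ) 1) (k : Fin n)
    (θ : Fin n → ℝ) {D : (Fin n → ℝ) →L[ℝ] ℂ}
    (hD : HasFDerivAt (fun θ => φ (AffineMap.lineMap (torusPoint R θ) z s) *
      cauchyKernelErase R z k θ) D θ) :
    D (Pi.single k 1) =
      ((1 - s) * (2 * π) : ℝ) * (fderiv ℝ φ (AffineMap.lineMap (torusPoint R θ) z s)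
        (Pi.single k (I * torusPoint R θ k)) * cauchyKernelErase R z k θ) := by
  have hpath : HasLineDerivAt ℝ (fun θ => (AffineMap.lineMap (torusPoint R θ) z s : Cn n))
      ((1 - s) • (2 * π) • (Pi.single k (I * torusPoint R θ k) : Cn n)) θ (Pi.single k 1) := by
    simp only [AffineMap.lineMap_apply_module]
    exact ((hasLineDerivAt_torusPoint R θ k).const_smul (1 - s)).add_const _
  have hφθ : HasFDerivAt φ (fderiv ℝ φ (AffineMap.lineMap (torusPoint R θ) z s))
      (AffineMap.lineMap (torusPoint R (θ + (0 : ℝ) • Pi.single k 1)) z s) := by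
    rw [zero_smul, add_zero]
    exact ((hφ.contDiffAt (hY.mem_nhds (hYR (lineMap_torusPoint_mem_closedPolydisc hz hs θ)))
      ).differentiableAt (by simp)).hasFDerivAt
  have hline := (hφθ.comp_hasDerivAt (0 : ℝ) hpath).mul_const (cauchyKernelErase R z k θ)
  have hD' := hD.hasLineDerivAt (Pi.single k 1)
  simp only [HasLineDerivAt, cauchyKernelErase_add_smul_single] at hD'
  rw [hD'.unique hline, map_smul, map_smul, real_smul, real_smul]
  push_cast
  ring

lemma integral_fderiv_torus_direction_eq_zero (hY : IsOpen Y) (hφ : ContDiffOn ℝ 1 φ Y)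
    (hYR : closedPolydisc R ⊆ Y) (hz : z ∈ polydisc R) (hs : s ∈ Ico (0 : ℝ) 1) :
    ∫ θ in Icc (0 : Fin n → ℝ) 1,
      ∑ k, fderiv ℝ φ (AffineMap.lineMap (torusPoint R θ) z s)
        (Pi.single k (I * torusPoint R θ k)) * cauchyKernelErase R z k θ = 0 := by
  have hs' := Ico_subset_Icc_self hs
  have hle : (1 : WithTop ℕ∞) ≤ ∞ := by exact_mod_cast le_top
  set F : Fin n → (Fin n → ℝ) → ℂ := fun k θ =>
    φ (AffineMap.lineMap (torusPoint R θ) z s) * cauchyKernelErase R z k θ with hFdef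
  have hF (k : Fin n) : ContDiff ℝ 1 (F k) := by
    have hpath := ((contDiff_lineMap_torusPoint_right R z s).of_le hle).contDiffOn (s := univ)
    have hcomp := hφ.comp hpath fun θ _ => hYR (lineMap_torusPoint_mem_closedPolydisc hz hs' θ)
    exact (contDiffOn_univ.1 hcomp).mul ((contDiff_cauchyKernelErase hz k).of_le hle)
  have hdiv := integral_unitBox_divergence_eq_zero F hF fun k θ => by
    simp only [hFdef, cauchyKernelErase, torusPoint_update_one]
  have hFderiv (θ : Fin n → ℝ) (k : Fin n) := fderiv_comp_lineMap_mul_cauchyKernelErase hY hφ hYR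
    hz hs' k θ ((hF k).differentiable (by simp) θ).hasFDerivAt
  simp only [hFderiv, ← Finset.mul_sum, integral_const_mul] at hdiv
  have hne : (((1 - s) * (2 * π) : ℝ) : ℂ) ≠ 0 :=
    ofReal_ne_zero.2 (mul_ne_zero (sub_ne_zero.2 hs.2.ne') (by positivity))
  exact (mul_eq_zero.1 hdiv).resolve_left hne

lemma norm_integral_fderiv_mul_cauchyKernel_le (hY : IsOpen Y) (hφ : ContDiffOn ℝ 1 φ Y)
    (hYR : closedPolydisc R ⊆ Y) (hz : z ∈ polydisc R) (hs : s ∈ Ico (0 : ℝ) 1) {N B : ℝ}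
    (hN : ∀ w ∈ closedPolydisc R, ∀ k, ‖wirtingerCoeff (k, true) (fderiv ℝ φ w)‖ ≤ N)
    (hB : ∀ θ ∈ Icc (0 : Fin n → ℝ) 1, ‖cauchyKernel R z θ‖ ≤ B) :
    ‖∫ θ in Icc (0 : Fin n → ℝ) 1, fderiv ℝ φ (AffineMap.lineMap (torusPoint R θ) z s)
      (z - torusPoint R θ) * cauchyKernel R z θ‖ ≤ N * B * ∑ k, 4 * R k := by
  have hmem := lineMap_torusPoint_mem_closedPolydisc hz (Ico_subset_Icc_self hs)
  have htorus : Continuous (torusPoint R) := (contDiff_torusPoint R).continuous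
  have hφ' : Continuous fun θ => fderiv ℝ φ (AffineMap.lineMap (torusPoint R θ) z s) :=
    (hφ.continuousOn_fderiv_of_isOpen hY le_rfl).comp_continuous
      (contDiff_lineMap_torusPoint_right R z s).continuous fun θ => hYR (hmem θ)
  have hradial : Continuous fun θ => fderiv ℝ φ (AffineMap.lineMap (torusPoint R θ) z s)
      (z - torusPoint R θ) * cauchyKernel R z θ :=
    (hφ'.clm_apply (continuous_const.sub htorus)).mul (contDiff_cauchyKernel hz).continuous
  have htangential : Continuous fun θ => I⁻¹ *
      ∑ k, fderiv ℝ φ (AffineMap.lineMap (torusPoint R θ) z s)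
        (Pi.single k (I * torusPoint R θ k)) * cauchyKernelErase R z k θ :=
    continuous_const.mul <| continuous_finsetSum _ fun k _ =>
      (hφ'.clm_apply ((continuous_single k).comp
        (continuous_const.mul ((continuous_apply k).comp htorus)))).mul
          (contDiff_cauchyKernelErase hz k).continuous
  rw [← add_zero (∫ θ in Icc (0 : Fin n → ℝ) 1, _), ← mul_zero I⁻¹,
    ← integral_fderiv_torus_direction_eq_zero hY hφ hYR hz hs, ← integral_const_mul,
    ← integral_add hradial.integrableOn_Icc htangential.integrableOn_Icc]
  refine norm_integral_unitBox_le fun θ hθ => ?_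
  rw [apply_mul_cauchyKernel_add_sum hz]
  exact norm_sum_mul_cauchyKernel_sub_le hz (hN _ (hmem θ)) (hB θ hθ)

lemma hasDerivAt_integral_lineMap_torusPoint (hY : IsOpen Y) (hφ : ContDiffOn ℝ 1 φ Y)
    (hYR : closedPolydisc R ⊆ Y) (hz : z ∈ polydisc R) (hs : s ∈ Icc (0 : ℝ) 1) :
    HasDerivAt (fun s : ℝ => ∫ θ in Icc (0 : Fin n → ℝ) 1,
        φ (AffineMap.lineMap (torusPoint R θ) z s) * cauchyKernel R z θ)
      (∫ θ in Icc (0 : Fin n → ℝ) 1, fderiv ℝ φ (AffineMap.lineMap (torusPoint R θ) z s)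
        (z - torusPoint R θ) * cauchyKernel R z θ) s := by
  have hpath := contDiff_lineMap_torusPoint R z
  have hkernel : ContDiff ℝ ∞ fun q : ℝ × (Fin n → ℝ) => cauchyKernel R z q.2 :=
    (contDiff_cauchyKernel hz).comp contDiff_snd
  have hmem (θ : Fin n → ℝ) : AffineMap.lineMap (torusPoint R θ) z s ∈ Y :=
    hYR (lineMap_torusPoint_mem_closedPolydisc hz hs θ)
  have hF : ContDiffOn ℝ 1 (fun q : ℝ × (Fin n → ℝ) =>
      φ (AffineMap.lineMap (torusPoint R q.2) z q.1) * cauchyKernel R z q.2)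
      {q | AffineMap.lineMap (torusPoint R q.2) z q.1 ∈ Y} :=
    (hφ.comp (hpath.of_le (by exact_mod_cast le_top)).contDiffOn fun _ hq => hq).mul
      (hkernel.of_le (by exact_mod_cast le_top)).contDiffOn
  have hderiv := hasDerivAt_setIntegral_of_contDiffOn (μ := volume)
    (isCompact_Icc (a := (0 : Fin n → ℝ)) (b := 1)) (hY.preimage hpath.continuous) hF
    (t₀ := s) (by rintro ⟨_, θ⟩ ⟨rfl, -⟩; exact hmem θ)
  refine hderiv.congr_deriv (integral_congr_ae (.of_forall fun θ => HasDerivAt.deriv ?_))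
  have hφθ : HasFDerivAt φ _ (AffineMap.lineMap (torusPoint R θ) z s) :=
    ((hφ.contDiffAt (hY.mem_nhds (hmem θ))).differentiableAt (by simp)).hasFDerivAt
  exact (hφθ.comp_hasDerivAt s AffineMap.hasDerivAt_lineMap).mul_const (cauchyKernel R z θ)

lemma norm_sub_integral_torus_le (hY : IsOpen Y) (hφ : ContDiffOn ℝ 1 φ Y)
    (hYR : closedPolydisc R ⊆ Y) (hz : z ∈ polydisc R) {N B : ℝ}
    (hN : ∀ w ∈ closedPolydisc R, ∀ k, ‖wirtingerCoeff (k, true) (fderiv ℝ φ w)‖ ≤ N)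
    (hB : ∀ θ ∈ Icc (0 : Fin n → ℝ) 1, ‖cauchyKernel R z θ‖ ≤ B) :
    ‖φ z - ∫ θ in Icc (0 : Fin n → ℝ) 1, φ (torusPoint R θ) * cauchyKernel R z θ‖ ≤
      N * B * ∑ k, 4 * R k := by
  have hmean := norm_image_sub_le_of_norm_deriv_le_segment_01'
    (fun s hs => (hasDerivAt_integral_lineMap_torusPoint hY hφ hYR hz hs).hasDerivWithinAt)
    (fun s hs => norm_integral_fderiv_mul_cauchyKernel_le hY hφ hYR hz hs hN hB)
  simpa only [AffineMap.lineMap_apply_one, AffineMap.lineMap_apply_zero, integral_const_mul,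
    integral_cauchyKernel hz, mul_one] using hmean

lemma norm_sub_cauchyIntegral_le {f : Pt n → ℂ} {X : Set (Pt n)} (hX : IsOpen X)
    (hf : ContDiffOn ℝ 1 f X) {p : Pt n} (hXR : ∀ w ∈ closedPolydisc R, (w, p.2) ∈ X)
    (hp : p.1 ∈ polydisc R) {N B : ℝ}
    (hN : ∀ w ∈ closedPolydisc R, ∀ k, ‖dzbar k f (w, p.2)‖ ≤ N)
    (hB : ∀ θ ∈ Icc (0 : Fin n → ℝ) 1, ‖cauchyKernel R p.1 θ‖ ≤ B) :
    ‖f p - cauchyIntegral R f p‖ ≤ N * B * ∑ k, 4 * R k := by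
  refine norm_sub_integral_torus_le (φ := fun w => f (w, p.2))
    (hX.preimage (Continuous.prodMk_left p.2))
    (hf.comp (contDiff_id.prodMk contDiff_const).contDiffOn fun _ hw => hw) hXR hp
    (fun w hw k => ?_) hB
  have hdiff : DifferentiableAt ℝ f (w, p.2) :=
    (hf.contDiffAt (hX.mem_nhds (hXR w hw))).differentiableAt (by simp)
  rw [← wirtinger_eq_slice hdiff (k, true), wirtinger_true]
  exact hN w hw k

end Pompeiu

section Landau

open Set
open scoped ContDiff

variable {E F : Type*} [NormedAddCommGroup E] [NormedSpace ℝ E] [NormedAddCommGroup F]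
  [NormedSpace ℝ F]

lemma norm_deriv_zero_le_of_norm_second_deriv_le {χ χ' χ'' : ℝ → F} {t M : ℝ} (ht : 0 < t)
    (hχ : ∀ x ∈ Icc 0 t, HasDerivAt χ (χ' x) x) (hχ' : ∀ x ∈ Icc 0 t, HasDerivAt χ' (χ'' x) x)
    (hM : ∀ x ∈ Icc 0 t, ‖χ'' x‖ ≤ M) :
    ‖χ' 0‖ ≤ (‖χ t‖ + ‖χ 0‖) / t + M * t := by
  have h0 : (0 : ℝ) ∈ Icc 0 t := left_mem_Icc.2 ht.le
  have hM0 : 0 ≤ M := (norm_nonneg _).trans (hM 0 h0)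
  have hvar (x : ℝ) (hx : x ∈ Icc 0 t) : ‖χ' x - χ' 0‖ ≤ M * t := by
    refine ((convex_Icc 0 t).norm_image_sub_le_of_norm_hasDerivWithin_le
      (fun y hy => (hχ' y hy).hasDerivWithinAt) hM h0 hx).trans ?_
    rw [sub_zero, Real.norm_of_nonneg hx.1]
    exact mul_le_mul_of_nonneg_left hx.2 hM0
  have htaylor := (convex_Icc 0 t).norm_image_sub_le_of_norm_hasDerivWithin_le
    (f := fun x => χ x - x • χ' 0) (fun x hx => ((hχ x hx).sub (by
      simpa using (hasDerivAt_id x).smul_const (χ' 0))).hasDerivWithinAt) hvar h0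
      (right_mem_Icc.2 ht.le)
  simp only [zero_smul, sub_zero, Real.norm_of_nonneg ht.le] at htaylor
  have hmul : t * ‖χ' 0‖ ≤ ‖χ t‖ + ‖χ 0‖ + M * t * t := calc
    t * ‖χ' 0‖ = ‖(χ t - χ 0) - (χ t - t • χ' 0 - χ 0)‖ := by
      rw [show (χ t - χ 0) - (χ t - t • χ' 0 - χ 0) = t • χ' 0 by abel, norm_smul,
        Real.norm_of_nonneg ht.le]
    _ ≤ ‖χ t‖ + ‖χ 0‖ + M * t * t :=
      (norm_sub_le _ _).trans (add_le_add (norm_sub_le _ _) htaylor)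
  rw [← sub_le_iff_le_add, le_div_iff₀ ht]
  linarith

lemma norm_fderiv_apply_le_of_norm_second_fderiv_le {G : E → F} {U : Set E} (hU : IsOpen U)
    (hG : ContDiffOn ℝ ∞ G U) {p v : E} {t M : ℝ} (ht : 0 < t)
    (hseg : ∀ x ∈ Icc 0 t, p + x • v ∈ U)
    (hM : ∀ x ∈ Icc 0 t, ‖fderiv ℝ (fun q => fderiv ℝ G q v) (p + x • v) v‖ ≤ M) :
    ‖fderiv ℝ G p v‖ ≤ (‖G (p + t • v)‖ + ‖G p‖) / t + M * t := by
  have hline {H : E → F} (hH : ContDiffOn ℝ ∞ H U) (x : ℝ) (hx : x ∈ Icc 0 t) :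
      HasDerivAt (fun x : ℝ => H (p + x • v)) (fderiv ℝ H (p + x • v) v) x := by
    have hpath : HasDerivAt (fun x : ℝ => p + x • v) v x := by
      simpa using ((hasDerivAt_id x).smul_const v).const_add p
    exact ((hH.contDiffAt (hU.mem_nhds (hseg x hx))).differentiableAt
      (by simp)).hasFDerivAt.comp_hasDerivAt x hpath
  have hG' : ContDiffOn ℝ ∞ (fun q => fderiv ℝ G q v) U :=
    (hG.fderiv_of_isOpen hU (by simp)).clm_apply contDiffOn_const
  simpa using norm_deriv_zero_le_of_norm_second_deriv_le ht (hline hG) (hline hG') hM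

end Landau

section Growth

open Set Metric
open scoped ContDiff

variable {n : ℕ}

lemma eucNorm_nonneg (ζ : Cn n) : 0 ≤ eucNorm ζ := Real.sqrt_nonneg _

/-- On `A`, the function `G` is of exponential type at most `h` in the second variable. -/
def ExpBoundOn (h : ℝ) (A : Set (Pt n)) (G : Pt n → ℂ) : Prop :=
  ∃ C : ℝ, 0 < C ∧ ∀ p ∈ A, ‖G p‖ ≤ C * Real.exp (h * eucNorm p.2)

/-- `G` has infra-exponential growth in `ζ ∈ S`, locally uniformly in `z ∈ U`. -/
def LocInfraExp (U S : Set (Cn n)) (G : Pt n → ℂ) : Prop :=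
  ∀ Z ⊆ U, IsCompact Z → ∀ h : ℝ, 0 < h → ExpBoundOn h (Z ×ˢ S) G

/-- `G` decays exponentially in `ζ ∈ S`, locally uniformly in `z ∈ U`; the rate of decay may depend
on the compact subset of `U`. -/
def LocExpDecay (U S : Set (Cn n)) (G : Pt n → ℂ) : Prop :=
  ∀ Z ⊆ U, IsCompact Z → ∃ h : ℝ, 0 < h ∧ ExpBoundOn (-h) (Z ×ˢ S) G

section ExpBoundOn

variable {h k : ℝ} {A B : Set (Pt n)} {G H : Pt n → ℂ}

lemma ExpBoundOn.mono (hG : ExpBoundOn h A G) (hBA : B ⊆ A) : ExpBoundOn h B G :=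
  let ⟨C, hC, hb⟩ := hG
  ⟨C, hC, fun p hp => hb p (hBA hp)⟩

lemma ExpBoundOn.weaken (hG : ExpBoundOn h A G) (hhk : h ≤ k) : ExpBoundOn k A G := by
  obtain ⟨C, hC, hb⟩ := hG
  refine ⟨C, hC, fun p hp => (hb p hp).trans ?_⟩
  have := eucNorm_nonneg p.2
  gcongr

lemma ExpBoundOn.congr (hG : ExpBoundOn h A G) (hGH : EqOn G H A) : ExpBoundOn h A H :=
  let ⟨C, hC, hb⟩ := hG
  ⟨C, hC, fun p hp => hGH hp ▸ hb p hp⟩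

lemma ExpBoundOn.add (hG : ExpBoundOn h A G) (hH : ExpBoundOn h A H) :
    ExpBoundOn h A (fun p => G p + H p) := by
  obtain ⟨C, hC, hb⟩ := hG
  obtain ⟨C', hC', hb'⟩ := hH
  refine ⟨C + C', by positivity, fun p hp => (norm_add_le _ _).trans ?_⟩
  rw [add_mul]
  exact add_le_add (hb p hp) (hb' p hp)

lemma ExpBoundOn.const_mul (hG : ExpBoundOn h A G) (c : ℂ) :
    ExpBoundOn h A (fun p => c * G p) := by
  obtain ⟨C, hC, hb⟩ := hG
  refine ⟨(‖c‖ + 1) * C, by positivity, fun p hp => ?_⟩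
  rw [norm_mul, mul_assoc]
  exact mul_le_mul (le_add_of_nonneg_right zero_le_one) (hb p hp) (norm_nonneg _) (by positivity)

end ExpBoundOn

variable {U S : Set (Cn n)} {G H : Pt n → ℂ}

lemma LocInfraExp.congr (hG : LocInfraExp U S G) (hGH : EqOn G H (U ×ˢ S)) :
    LocInfraExp U S H :=
  fun Z hZU hZ h hh => (hG Z hZU hZ h hh).congr (hGH.mono (prod_mono_left hZU))

lemma LocInfraExp.add (hG : LocInfraExp U S G) (hH : LocInfraExp U S H) :
    LocInfraExp U S (fun p => G p + H p) :=
  fun Z hZU hZ h hh => (hG Z hZU hZ h hh).add (hH Z hZU hZ h hh)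

lemma LocInfraExp.const_mul (hG : LocInfraExp U S G) (c : ℂ) :
    LocInfraExp U S (fun p => c * G p) :=
  fun Z hZU hZ h hh => (hG Z hZU hZ h hh).const_mul c

lemma LocInfraExp.sub (hG : LocInfraExp U S G) (hH : LocInfraExp U S H) :
    LocInfraExp U S (fun p => G p - H p) := by
  simpa [sub_eq_add_neg] using hG.add (hH.const_mul (-1))

lemma locInfraExp_zero (U S : Set (Cn n)) : LocInfraExp U S 0 :=
  fun _ _ _ h _ => ⟨1, one_pos, fun p _ => by simpa using (Real.exp_pos (h * eucNorm p.2)).le⟩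

lemma LocExpDecay.add (hG : LocExpDecay U S G) (hH : LocExpDecay U S H) :
    LocExpDecay U S (fun p => G p + H p) := fun Z hZU hZ => by
  obtain ⟨h, hh, hbG⟩ := hG Z hZU hZ
  obtain ⟨k, hk, hbH⟩ := hH Z hZU hZ
  exact ⟨min h k, lt_min hh hk, (hbG.weaken (neg_le_neg (min_le_left h k))).add
    (hbH.weaken (neg_le_neg (min_le_right h k)))⟩

lemma LocExpDecay.const_mul (hG : LocExpDecay U S G) (c : ℂ) :
    LocExpDecay U S (fun p => c * G p) := fun Z hZU hZ =>
  let ⟨h, hh, hb⟩ := hG Z hZU hZ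
  ⟨h, hh, hb.const_mul c⟩

lemma add_mem_cthickening {E : Type*} [SeminormedAddCommGroup E] {Z : Set E} {z v : E} {δ : ℝ}
    (hz : z ∈ Z) (hv : ‖v‖ ≤ δ) : z + v ∈ cthickening δ Z :=
  mem_cthickening_of_dist_le _ z δ Z hz (by simpa using hv)

lemma LocInfraExp.dz (hU : IsOpen U) (hG : ∀ p ∈ U ×ˢ S, DifferentiableAt ℝ G p) {i : Fin n}
    (hbar : ∀ p ∈ U ×ˢ S, dzbar i G p = 0) (hinfra : LocInfraExp U S G) :
    LocInfraExp U S (dz i G) := fun Z hZU hZ h hh => by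
  obtain ⟨δ, hδ, hδU⟩ := hZ.exists_cthickening_subset_open hU hZU
  obtain ⟨C, hC, hb⟩ := hinfra _ hδU hZ.cthickening h hh
  refine ⟨C / δ, by positivity, fun ⟨z, ζ⟩ ⟨hz, hζ⟩ => ?_⟩
  have hmem {w : ℂ} (hw : ‖w‖ ≤ δ) : z + Pi.single i w ∈ cthickening δ Z :=
    add_mem_cthickening hz (by rwa [Pi.norm_single])
  have hslice {w : ℂ} (hw : ‖w‖ ≤ δ) :=
    hasDerivAt_slice_of_dzbar_eq_zero (hG (_, ζ) ⟨hδU (hmem hw), hζ⟩) (hbar _ ⟨hδU (hmem hw), hζ⟩)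
  have hcauchy := norm_deriv_le_of_forall_mem_sphere_norm_le (c := 0)
    (f := fun w : ℂ => G (z + Pi.single i w, ζ)) (C := C * Real.exp (h * eucNorm ζ)) hδ
    (DifferentiableOn.diffContOnCl fun w hw => (hslice (mem_closedBall_zero_iff.1
      (closure_ball_subset_closedBall hw))).differentiableAt.differentiableWithinAt)
    fun w hw => hb _ ⟨hmem (mem_sphere_zero_iff_norm.1 hw).le, hζ⟩
  rw [(hslice (w := 0) (by simpa using hδ.le)).deriv, Pi.single_zero, add_zero] at hcauchy
  exact hcauchy.trans_eq (by ring)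

lemma LocInfraExp.wirtingerWord_of_dzbar_eq_zero (hU : IsOpen U) (hS : IsOpen S)
    (hG : ContDiffOn ℝ ∞ G (U ×ˢ S)) (hbar : ∀ i, ∀ p ∈ U ×ˢ S, dzbar i G p = 0)
    (hinfra : LocInfraExp U S G) (w : List (Fin n × Bool)) :
    LocInfraExp U S (wirtingerWord w G) := by
  have hUS := hU.prod hS
  have hzero (i : Fin n) (w : List (Fin n × Bool)) :
      EqOn (wirtingerWord ((i, true) :: w) G) 0 (U ×ˢ S) :=
    wirtingerWord_eqOn_zero hUS hG (wirtinger_true i ▸ hbar i) List.mem_cons_self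
  induction w with
  | nil => exact hinfra
  | cons a w ih =>
    obtain ⟨i, _ | _⟩ := a
    · have hsmooth := contDiffOn_wirtingerWord hUS w hG
      rw [wirtingerWord_cons, wirtinger_false]
      refine ih.dz hU (fun p hp => (hsmooth.contDiffAt (hUS.mem_nhds hp)).differentiableAt
        (by simp)) fun p hp => ?_
      rw [← wirtinger_true]
      exact hzero i w hp
    · exact (locInfraExp_zero U S).congr (hzero i w).symm

lemma LocInfraExp.fderiv_single {i : Fin n} (hG : ∀ b, LocInfraExp U S (wirtinger (i, b) G))
    (c : ℂ) : LocInfraExp U S (fun p => fderiv ℝ G p (Pi.single i c, 0)) := by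
  simp only [fderiv_single_eq_wirtinger, mul_comm _ c, mul_comm _ ((starRingEnd ℂ) c)]
  exact ((hG false).const_mul c).add ((hG true).const_mul _)

lemma LocInfraExp.fderiv_fderiv_single (hU : IsOpen U) (hS : IsOpen S)
    (hG : ContDiffOn ℝ ∞ G (U ×ˢ S)) {i : Fin n}
    (hinfra : ∀ b b', LocInfraExp U S (wirtinger (i, b) (wirtinger (i, b') G))) (c : ℂ) :
    LocInfraExp U S (fun p => fderiv ℝ (fun q => fderiv ℝ G q (Pi.single i c, 0)) p
      (Pi.single i c, 0)) := by
  have hUS := hU.prod hS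
  refine (((fderiv_single (hinfra · false) c).const_mul c).add
    ((fderiv_single (hinfra · true) c).const_mul ((starRingEnd ℂ) c))).congr fun p hp => ?_
  have hdiff (b : Bool) : DifferentiableAt ℝ (wirtinger (i, b) G) p :=
    ((contDiffOn_wirtinger hUS (i, b) hG).contDiffAt (hUS.mem_nhds hp)).differentiableAt (by simp)
  simp only [fderiv_single_eq_wirtinger G]
  rw [fderiv_fun_add ((hdiff false).mul_const _) ((hdiff true).mul_const _),
    fderiv_mul_const (hdiff false), fderiv_mul_const (hdiff true)]
  rfl

-- The step length `t = ρ * exp (-(h / 2) * E)` balances both terms of Landau's inequality.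
lemma landau_bound_le {A C E h ρ a b M t : ℝ} (hA : 0 < A) (hC : 0 < C) (hE : 0 ≤ E) (hh : 0 < h)
    (hρ : 0 < ρ) (ht : t = ρ * Real.exp (-(h / 2) * E)) (ha : a ≤ C * Real.exp (-h * E))
    (hb : b ≤ C * Real.exp (-h * E)) (hM : M = A * Real.exp (h / 4 * E)) :
    (a + b) / t + M * t ≤ (2 * C / ρ + A * ρ) * Real.exp (-(h / 4) * E) := by
  have hsplit : Real.exp (-h * E) = Real.exp (-(h / 2) * E) * Real.exp (-(h / 2) * E) := by
    rw [← Real.exp_add]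
    ring_nf
  have hsplit' : Real.exp (-(h / 4) * E) = Real.exp (h / 4 * E) * Real.exp (-(h / 2) * E) := by
    rw [← Real.exp_add]
    ring_nf
  have hle : Real.exp (-(h / 2) * E) ≤ Real.exp (-(h / 4) * E) :=
    Real.exp_le_exp.2 (by nlinarith)
  have ht0 : 0 < t := ht ▸ by positivity
  calc (a + b) / t + M * t
      ≤ (2 * C * Real.exp (-h * E)) / t + M * t := by gcongr; linarith
    _ = 2 * C / ρ * Real.exp (-(h / 2) * E) + A * ρ * Real.exp (-(h / 4) * E) := by
        rw [hsplit, hsplit', ht, hM]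
        field_simp
    _ ≤ 2 * C / ρ * Real.exp (-(h / 4) * E) + A * ρ * Real.exp (-(h / 4) * E) := by gcongr
    _ = (2 * C / ρ + A * ρ) * Real.exp (-(h / 4) * E) := by ring

lemma LocExpDecay.fderiv_apply (hU : IsOpen U) (hS : IsOpen S) (hG : ContDiffOn ℝ ∞ G (U ×ˢ S))
    (hdecay : LocExpDecay U S G) {v : Cn n}
    (hinfra : LocInfraExp U S (fun p => fderiv ℝ (fun q => fderiv ℝ G q (v, 0)) p (v, 0))) :
    LocExpDecay U S (fun p => fderiv ℝ G p (v, 0)) := fun Z hZU hZ => by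
  obtain ⟨δ, hδ, hδU⟩ := hZ.exists_cthickening_subset_open hU hZU
  obtain ⟨h, hh, C, hC, hb⟩ := hdecay _ hδU hZ.cthickening
  obtain ⟨A, hA, hb₂⟩ := hinfra _ hδU hZ.cthickening (h / 4) (by positivity)
  set ρ := δ / (‖v‖ + 1)
  have hρ : 0 < ρ := by positivity
  refine ⟨h / 4, by positivity, 2 * C / ρ + A * ρ, by positivity, fun ⟨z, ζ⟩ ⟨hz, hζ⟩ => ?_⟩
  have hE := eucNorm_nonneg ζ
  set t := ρ * Real.exp (-(h / 2) * eucNorm ζ) with ht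
  have ht0 : 0 < t := by positivity
  have htρ : t ≤ ρ := mul_le_of_le_one_right hρ.le (Real.exp_le_one_iff.2 (by nlinarith))
  have hseg (x : ℝ) (hx : x ∈ Icc 0 t) :
      ((z, ζ) + x • (v, 0) : Pt n) ∈ cthickening δ Z ×ˢ S := by
    refine ⟨add_mem_cthickening hz ?_, by simpa using hζ⟩
    calc ‖x • v‖ = x * ‖v‖ := by rw [norm_smul, Real.norm_of_nonneg hx.1]
      _ ≤ ρ * (‖v‖ + 1) := by
        gcongr
        exacts [hx.2.trans htρ, le_add_of_nonneg_right zero_le_one]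
      _ = δ := div_mul_cancel₀ δ (by positivity)
  have hbG (x : ℝ) (hx : x ∈ Icc 0 t) :
      ‖G ((z, ζ) + x • (v, 0))‖ ≤ C * Real.exp (-h * eucNorm ζ) := by
    simpa using hb _ (hseg x hx)
  have hlandau := norm_fderiv_apply_le_of_norm_second_fderiv_le (hU.prod hS) hG ht0
    (M := A * Real.exp (h / 4 * eucNorm ζ)) (fun x hx => prod_mono_left hδU (hseg x hx))
    fun x hx => by simpa using hb₂ _ (hseg x hx)
  exact hlandau.trans (landau_bound_le hA hC hE hh hρ ht (hbG t ⟨ht0.le, le_rfl⟩)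
    (by simpa using hbG 0 ⟨le_rfl, ht0.le⟩) rfl)

lemma LocExpDecay.wirtinger (hU : IsOpen U) (hS : IsOpen S) (hG : ContDiffOn ℝ ∞ G (U ×ˢ S))
    (hdecay : LocExpDecay U S G)
    (hinfra : ∀ a b, LocInfraExp U S (wirtinger a (wirtinger b G))) (a : Fin n × Bool) :
    LocExpDecay U S (wirtinger a G) := by
  have hderiv (c : ℂ) : LocExpDecay U S (fun p => fderiv ℝ G p (Pi.single a.1 c, 0)) :=
    hdecay.fderiv_apply hU hS hG (.fderiv_fderiv_single hU hS hG (fun _ _ => hinfra _ _) c)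
  exact ((hderiv 1).add ((hderiv I).const_mul _)).const_mul (1 / 2)

lemma LocExpDecay.wirtingerWord (hU : IsOpen U) (hS : IsOpen S)
    (hG : ContDiffOn ℝ ∞ G (U ×ˢ S)) (hdecay : LocExpDecay U S G)
    (hinfra : ∀ w, LocInfraExp U S (wirtingerWord w G)) (w : List (Fin n × Bool)) :
    LocExpDecay U S (wirtingerWord w G) := by
  induction w with
  | nil => exact hdecay
  | cons a w ih =>
    exact ih.wirtinger hU hS (contDiffOn_wirtingerWord (hU.prod hS) w hG)
      (fun b c => hinfra (b :: c :: w)) a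

end Growth

section Correction

open Set
open scoped ContDiff

variable {n : ℕ} {R : Fin n → ℝ} {f : Pt n → ℂ} {X : Set (Pt n)} {S : Set (Cn n)}

lemma exists_common_expBoundOn_neg {ι : Type*} [Finite ι] {A : Set (Pt n)} {G : ι → Pt n → ℂ}
    (hG : ∀ i, ∃ h : ℝ, 0 < h ∧ ExpBoundOn (-h) A (G i)) :
    ∃ h C : ℝ, 0 < h ∧ 0 < C ∧ ∀ p ∈ A, ∀ i, ‖G i p‖ ≤ C * Real.exp (-h * eucNorm p.2) := by
  choose h hh C hC hb using hG
  cases isEmpty_or_nonempty ι with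
  | inl _ => exact ⟨1, 1, one_pos, one_pos, fun p _ i => isEmptyElim i⟩
  | inr _ =>
    obtain ⟨i₀, hi₀⟩ := Finite.exists_min h
    obtain ⟨j₀, hj₀⟩ := Finite.exists_max C
    refine ⟨h i₀, C j₀, hh i₀, hC j₀, fun p hp i => (hb i p hp).trans ?_⟩
    have := eucNorm_nonneg p.2
    have := (hC j₀).le
    gcongr
    exacts [hj₀ i, hi₀ i]

lemma locInfraExp_cauchyIntegral (hR : ∀ i, 0 ≤ R i)
    (hf : ∀ h : ℝ, 0 < h → ExpBoundOn h (closedPolydisc R ×ˢ S) f) :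
    LocInfraExp (polydisc R) S (cauchyIntegral R f) := fun Z hZR hZ h hh => by
  obtain ⟨C, hC, hfC⟩ := hf h hh
  obtain ⟨B, hB⟩ := exists_norm_cauchyKernel_le hZ hZR
  refine ⟨C * max B 1, by positivity, fun p hp => ?_⟩
  calc ‖cauchyIntegral R f p‖
      ≤ C * Real.exp (h * eucNorm p.2) * max B 1 :=
        norm_cauchyIntegral_le hR (fun w hw => hfC (w, p.2) ⟨hw, hp.2⟩)
          fun θ hθ => (hB p.1 hp.1 θ hθ).trans (le_max_left B 1)
    _ = C * max B 1 * Real.exp (h * eucNorm p.2) := by ring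

lemma locExpDecay_sub_cauchyIntegral (hR : ∀ i, 0 ≤ R i) (hX : IsOpen X)
    (hf : ContDiffOn ℝ 1 f X) (hXR : closedPolydisc R ×ˢ S ⊆ X)
    (hdecay : ∀ i, ∃ h : ℝ, 0 < h ∧ ExpBoundOn (-h) (closedPolydisc R ×ˢ S) (dzbar i f)) :
    LocExpDecay (polydisc R) S (fun p => f p - cauchyIntegral R f p) := fun Z hZR hZ => by
  obtain ⟨h, C, hh, hC, hfC⟩ := exists_common_expBoundOn_neg hdecay
  obtain ⟨B, hB⟩ := exists_norm_cauchyKernel_le hZ hZR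
  have hsum : 0 ≤ ∑ k, 4 * R k := Finset.sum_nonneg fun k _ => mul_nonneg zero_le_four (hR k)
  refine ⟨h, hh, C * max B 1 * (1 + ∑ k, 4 * R k), by positivity, fun p hp => ?_⟩
  calc ‖f p - cauchyIntegral R f p‖
      ≤ C * Real.exp (-h * eucNorm p.2) * max B 1 * ∑ k, 4 * R k :=
        norm_sub_cauchyIntegral_le hX hf (fun w hw => hXR ⟨hw, hp.2⟩) (hZR hp.1)
          (fun w hw k => hfC (w, p.2) ⟨hw, hp.2⟩ k)
          fun θ hθ => (hB p.1 hp.1 θ hθ).trans (le_max_left B 1)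
    _ ≤ C * Real.exp (-h * eucNorm p.2) * max B 1 * (1 + ∑ k, 4 * R k) := by
        gcongr
        exact le_add_of_nonneg_left zero_le_one
    _ = C * max B 1 * (1 + ∑ k, 4 * R k) * Real.exp (-h * eucNorm p.2) := by ring

lemma locExpDecay_mixedDeriv_sub_cauchyIntegral (hR : ∀ i, 0 ≤ R i) (hX : IsOpen X)
    (hS : IsOpen S) (hf : ContDiffOn ℝ ∞ f X) (hXR : closedPolydisc R ×ˢ S ⊆ X)
    (hol : ∀ w ∈ closedPolydisc R, ∀ ζ ∈ S, DifferentiableAt ℂ (fun ζ => f (w, ζ)) ζ)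
    (hinfra : ∀ α β, ∀ h : ℝ, 0 < h → ExpBoundOn h (closedPolydisc R ×ˢ S) (mixedDeriv α β f))
    (hdecay : ∀ i, ∃ h : ℝ, 0 < h ∧ ExpBoundOn (-h) (closedPolydisc R ×ˢ S) (dzbar i f))
    (α β : Fin n → ℕ) :
    LocExpDecay (polydisc R) S (mixedDeriv α β fun p => f p - cauchyIntegral R f p) := by
  have hU : IsOpen (polydisc R ×ˢ S) := (isOpen_polydisc R).prod hS
  have hUX : polydisc R ×ˢ S ⊆ X := (prod_mono_left (polydisc_subset_closedPolydisc R)).trans hXR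
  have smooth_cauchy := contDiffOn_cauchyIntegral hR hS hf hXR
  have infra_f (w) : LocInfraExp (polydisc R) S (wirtingerWord w f) := fun Z hZR _ h hh => by
    obtain ⟨α, β, hw⟩ := exists_mixedDeriv_eqOn_wirtingerWord hX hf w
    exact ((hinfra α β h hh).congr (hw.symm.mono hXR)).mono
      (prod_mono_left (hZR.trans (polydisc_subset_closedPolydisc R)))
  have infra_cauchy (w) : LocInfraExp (polydisc R) S (wirtingerWord w (cauchyIntegral R f)) := by
    refine LocInfraExp.wirtingerWord_of_dzbar_eq_zero (isOpen_polydisc R) hS smooth_cauchy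
      (fun i p hp => dzbar_eq_zero ?_ i) (locInfraExp_cauchyIntegral hR ?_) w
    · exact (differentiableOn_cauchyIntegral hR hS hf hXR hol).differentiableAt (hU.mem_nhds hp)
    · simpa only [mixedDeriv_zero_zero] using hinfra 0 0
  rw [mixedDeriv_eq_wirtingerWord]
  exact LocExpDecay.wirtingerWord (isOpen_polydisc R) hS ((hf.mono hUX).sub smooth_cauchy)
    (locExpDecay_sub_cauchyIntegral hR hX (hf.of_le (by exact_mod_cast le_top)) hXR hdecay)
    (fun w => ((infra_f w).sub (infra_cauchy w)).congr
      (wirtingerWord_sub hU w (hf.mono hUX) smooth_cauchy).symm) _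

end Correction

section Wedges

open Set
open scoped Pointwise

variable {n : ℕ} {V V' W : Set (Pt n)} {Z U L Γ : Set (Cn n)} {r ρ R : Fin n → ℝ} {f : Pt n → ℂ}

lemma relCpt_of_isCompact {K : Set (Pt n)} (hK : IsCompact K) (hKV : K ⊆ V) : RelCpt K V := by
  rw [RelCpt, hK.isClosed.closure_eq]
  exact ⟨hK, hKV⟩

lemma isInfWedge_interior (hV : IsOpen V) (hW : IsInfWedge V W) : IsInfWedge V (interior W) := by
  refine ⟨interior_subset.trans hW.1, fun K hK => ?_⟩
  obtain ⟨L, hL, hKL, hLV⟩ := exists_compact_between hK.1 hV hK.2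
  obtain ⟨δ, hδ, hLW⟩ := hW.2 L (relCpt_of_isCompact hL hLV)
  refine ⟨δ, hδ, fun p hp t ht => ?_⟩
  have ht0 : t ≠ 0 := (hδ.trans ht).ne'
  have hcont : Continuous fun q : Pt n => ((q.1, t⁻¹ • q.2) : Pt n) := by fun_prop
  refine mem_interior.2 ⟨_ ⁻¹' interior L, fun q hq => ?_, isOpen_interior.preimage hcont, ?_⟩
  · simpa only [smul_inv_smul₀ ht0] using hLW _ (interior_subset hq) t ht
  · simpa only [mem_preimage, inv_smul_smul₀ ht0] using hKL (subset_closure hp)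

lemma IsInfWedge.inter_iInter {ι : Type*} [Finite ι] {W' : ι → Set (Pt n)} (hW : IsInfWedge V W)
    (hW' : ∀ i, IsInfWedge V (W' i)) : IsInfWedge V (W ∩ ⋂ i, W' i) := by
  refine ⟨inter_subset_left.trans hW.1, fun K hK => ?_⟩
  obtain ⟨δ, hδ, hKW⟩ := hW.2 K hK
  choose δ' _ hKW' using fun i => (hW' i).2 K hK
  obtain ⟨M, hM⟩ := (finite_range δ').bddAbove
  refine ⟨max δ M, lt_max_of_lt_left hδ, fun p hp t ht => ⟨?_, mem_iInter.2 fun i => ?_⟩⟩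
  · exact hKW p hp t ((le_max_left δ M).trans_lt ht)
  · exact hKW' i p hp t (((hM (mem_range_self i)).trans (le_max_right δ M)).trans_lt ht)

/-- The parameters `ζ` such that the slice of `W` over `ζ` contains all of `Z`. -/
def tube (Z : Set (Cn n)) (W : Set (Pt n)) : Set (Cn n) := {ζ | ∀ z ∈ Z, (z, ζ) ∈ W}

lemma isOpen_tube (hZ : IsCompact Z) (hW : IsOpen W) : IsOpen (tube Z W) := by
  refine isOpen_iff_eventually.2 fun ζ hζ => ?_
  exact hZ.eventually_forall_of_forall_eventually fun z hz =>
    (hW.preimage continuous_swap).mem_nhds (hζ z hz)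

lemma prod_tube_subset (Z : Set (Cn n)) (W : Set (Pt n)) : Z ×ˢ tube Z W ⊆ W :=
  fun p hp => hp.2 p.1 hp.1

lemma tube_mono {W' : Set (Pt n)} (hW : W ⊆ W') : tube Z W ⊆ tube Z W' :=
  fun _ hζ z hz => hW (hζ z hz)

lemma isInfWedge_inter_tube (hZ : IsCompact Z) (hV' : IsCone V')
    (hZV : Z ×ˢ (Prod.snd '' V') ⊆ V) (hW : IsInfWedge V W) :
    IsInfWedge V' (V' ∩ Prod.snd ⁻¹' tube Z W) := by
  refine ⟨inter_subset_left, fun K ⟨hK, hKV'⟩ => ?_⟩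
  obtain ⟨δ, hδ, hKW⟩ := hW.2 (Z ×ˢ (Prod.snd '' closure K))
    (relCpt_of_isCompact (hZ.prod (hK.image continuous_snd))
      ((prod_mono_right (image_mono hKV')).trans hZV))
  refine ⟨δ, hδ, fun p hp t ht => ⟨?_, fun z hz => ?_⟩⟩
  · exact hV' p (hKV' (subset_closure hp)) t (hδ.trans ht)
  · exact hKW (z, p.2) ⟨hz, p, subset_closure hp, rfl⟩ t ht

lemma ConeRelCpt.subset (hV' : ConeRelCpt V' V) (hV : IsCone V) : V' ⊆ V := by
  obtain ⟨K, ⟨-, hKV⟩, rfl⟩ := hV'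
  rintro _ ⟨t, ht, q, hq, rfl⟩
  exact hV q (hKV (subset_closure hq)) t ht

lemma isOpen_Ioi_smul (hL : IsOpen L) : IsOpen (Ioi (0 : ℝ) • L) := by
  rw [← iUnion_smul_set]
  exact isOpen_biUnion fun t (ht : 0 < t) => hL.smul₀ ht.ne'

lemma isCone_prod (U : Set (Cn n)) (hΓ : ∀ ζ ∈ Γ, ∀ t : ℝ, 0 < t → t • ζ ∈ Γ) :
    IsCone (U ×ˢ Γ) :=
  fun p hp t ht => ⟨hp.1, hΓ p.2 hp.2 t ht⟩

lemma isCone_prod_Ioi_smul (U L : Set (Cn n)) : IsCone (U ×ˢ (Ioi (0 : ℝ) • L)) := by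
  refine isCone_prod U ?_
  rintro _ ⟨s, hs, η, hη, rfl⟩ t ht
  exact ⟨t * s, mul_pos ht hs, η, hη, mul_smul t s η⟩

lemma coneRelCpt_polydisc_prod (hρ : ∀ i, ρ i < r i) (hL : IsCompact (closure L))
    (hLΓ : closure L ⊆ Γ) :
    ConeRelCpt (polydisc ρ ×ˢ (Ioi (0 : ℝ) • L)) (polydisc r ×ˢ Γ) := by
  have hρcl : closure (polydisc ρ) ⊆ closedPolydisc ρ :=
    closure_minimal (polydisc_subset_closedPolydisc ρ) (isCompact_closedPolydisc ρ).isClosed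
  refine ⟨polydisc ρ ×ˢ L, ?_, Subset.antisymm ?_ ?_⟩
  · rw [RelCpt, closure_prod_eq]
    exact ⟨((isCompact_closedPolydisc ρ).of_isClosed_subset isClosed_closure hρcl).prod hL,
      prod_mono (hρcl.trans (closedPolydisc_subset_polydisc hρ)) hLΓ⟩
  · rintro ⟨z, _⟩ ⟨hz, t, ht, η, hη, rfl⟩
    exact ⟨t, ht, (z, η), ⟨hz, hη⟩, rfl⟩
  · rintro _ ⟨t, ht, q, hq, rfl⟩
    exact ⟨hq.1, smul_mem_smul ht hq.2⟩

lemma ConeRelCpt.exists_open_enlargement (hΓ : IsOpen Γ) (hρ : ∀ i, ρ i < r i)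
    (hV' : ConeRelCpt V' (U ×ˢ Γ)) :
    ∃ T : Set (Cn n), Prod.snd '' V' ⊆ T ∧ IsOpen (polydisc ρ ×ˢ T) ∧ IsCone (polydisc ρ ×ˢ T) ∧
      ConeRelCpt (polydisc ρ ×ˢ T) (polydisc r ×ˢ Γ) := by
  obtain ⟨K, ⟨hK, hKV⟩, rfl⟩ := hV'
  have hKΓ : Prod.snd '' closure K ⊆ Γ := image_subset_iff.2 fun q hq => (hKV hq).2
  obtain ⟨L, hLopen, hKL, hLΓ, hL⟩ :=
    exists_open_between_and_isCompact_closure (hK.image continuous_snd) hΓ hKΓ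
  refine ⟨Ioi (0 : ℝ) • L, ?_, (isOpen_polydisc ρ).prod (isOpen_Ioi_smul hLopen),
    isCone_prod_Ioi_smul _ L, coneRelCpt_polydisc_prod hρ hL hLΓ⟩
  rintro _ ⟨_, ⟨t, ht, q, hq, rfl⟩, rfl⟩
  exact smul_mem_smul ht (hKL (mem_image_of_mem _ (subset_closure hq)))

lemma IsSymbolInf.exists_isOpen_expBoundOn (hΓ : IsOpen Γ)
    (hf : IsSymbolInf (polydisc r ×ˢ Γ) W f) (hR : ∀ i, R i < r i) (hcone : IsCone V')
    (hV' : ConeRelCpt V' (U ×ˢ Γ)) :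
    ∃ X ⊆ W, IsOpen X ∧ IsInfWedge V' (V' ∩ Prod.snd ⁻¹' tube (closedPolydisc R) X) ∧
      (∀ α β, ∀ h : ℝ, 0 < h → ExpBoundOn h X (mixedDeriv α β f)) ∧
      ∀ i, ∃ h : ℝ, 0 < h ∧ ExpBoundOn (-h) X (dzbar i f) := by
  obtain ⟨-, -, hinfra, hnull⟩ := hf
  choose ρ hRρ hρr using fun i => exists_between (hR i)
  obtain ⟨T, hV'T, hTopen, hTcone, hTcpt⟩ := hV'.exists_open_enlargement hΓ hρr
  obtain ⟨W₀, hW₀W, hW₀, hW₀_bound⟩ := hinfra _ hTopen hTcone hTcpt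
  choose Wi hWi using hnull
  choose W₁ _ hW₁ hW₁_bound using fun i => (hWi i).2.2 _ hTopen hTcone hTcpt
  have hsub₀ : interior (W₀ ∩ ⋂ i, W₁ i) ⊆ W₀ := interior_subset.trans inter_subset_left
  refine ⟨interior (W₀ ∩ ⋂ i, W₁ i), hsub₀.trans hW₀W, isOpen_interior, ?_, ?_, fun i => ?_⟩
  · exact isInfWedge_inter_tube (isCompact_closedPolydisc R) hcone
      (prod_mono (closedPolydisc_subset_polydisc hRρ) hV'T)
      (isInfWedge_interior hTopen (hW₀.inter_iInter hW₁))
  · exact fun α β h hh => ExpBoundOn.mono (hW₀_bound α β h hh) hsub₀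
  · obtain ⟨h, C, hh, hC, hb⟩ := hW₁_bound i 0 0
    have hsub₁ : interior (W₀ ∩ ⋂ i, W₁ i) ⊆ W₁ i :=
      interior_subset.trans (inter_subset_right.trans (iInter_subset W₁ i))
    rw [mixedDeriv_zero_zero] at hb
    exact ⟨h, hh, ExpBoundOn.mono ⟨C, hC, hb⟩ hsub₁⟩

end Wedges

section Representative

open Set
open scoped ContDiff

variable {n : ℕ} {r r' R : Fin n → ℝ} {Γ : Set (Cn n)} {W : Set (Pt n)} {f : Pt n → ℂ}

lemma CinfO.differentiableAt_snd {X : Set (Pt n)} (hf : CinfO W f) (hX : IsOpen X) (hXW : X ⊆ W)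
    {p : Pt n} (hp : p ∈ X) : DifferentiableAt ℂ (fun ζ => f (p.1, ζ)) p.2 :=
  (hf.2 p.1).differentiableAt <|
    Filter.mem_of_superset ((hX.preimage (Continuous.prodMk_right p.1)).mem_nhds hp)
      fun _ hζ => hXW hζ

lemma CinfO.differentiableOn_cauchyIntegral (hR : ∀ i, 0 ≤ R i) (hf : CinfO W f) :
    DifferentiableOn ℂ (cauchyIntegral R f)
      (polydisc R ×ˢ tube (closedPolydisc R) (interior W)) :=
  _root_.differentiableOn_cauchyIntegral hR
    (isOpen_tube (isCompact_closedPolydisc R) isOpen_interior) (hf.1.mono interior_subset)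
    (prod_tube_subset _ _)
    fun w hw _ hζ => hf.differentiableAt_snd (p := (w, _)) isOpen_interior interior_subset (hζ w hw)

lemma CinfO.sub_cauchyIntegral (hR : ∀ i, 0 ≤ R i) (hf : CinfO W f) :
    CinfO (polydisc R ×ˢ tube (closedPolydisc R) (interior W))
      (fun p => f p - cauchyIntegral R f p) := by
  have hsub : polydisc R ×ˢ tube (closedPolydisc R) (interior W) ⊆ interior W :=
    (prod_mono_left (polydisc_subset_closedPolydisc R)).trans (prod_tube_subset _ _)
  refine ⟨?_, fun z => ?_⟩
  · exact (hf.1.mono (hsub.trans interior_subset)).sub (contDiffOn_cauchyIntegral hR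
      (isOpen_tube (isCompact_closedPolydisc R) isOpen_interior) (hf.1.mono interior_subset)
      (prod_tube_subset _ _))
  · have hslice (ζ) (hζ : (z, ζ) ∈ _) : (z, ζ) ∈ W := interior_subset (hsub hζ)
    refine DifferentiableOn.sub ((hf.2 z).mono hslice) ?_
    exact (hf.differentiableOn_cauchyIntegral hR).comp
      ((differentiableOn_const z).prodMk differentiableOn_id) fun _ hζ => hζ

lemma CinfO.mono {W' : Set (Pt n)} (hf : CinfO W f) (hW : W' ⊆ W) : CinfO W' f :=
  ⟨hf.1.mono hW, fun z => (hf.2 z).mono fun _ hζ => hW hζ⟩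

lemma IsSymbolInf.exists_isInfWedge_bounds_cauchyIntegral (hΓ : IsOpen Γ)
    (hΓcone : ∀ ζ ∈ Γ, ∀ t : ℝ, 0 < t → t • ζ ∈ Γ) (hf : IsSymbolInf (polydisc r ×ˢ Γ) W f)
    (hR : ∀ i, 0 ≤ R i) (hr' : ∀ i, r' i < R i) (hRr : ∀ i, R i < r i) {V' : Set (Pt n)}
    (hcone : IsCone V') (hV' : ConeRelCpt V' (polydisc r' ×ˢ Γ)) :
    ∃ W' ⊆ (polydisc r' ×ˢ Γ) ∩ Prod.snd ⁻¹' tube (closedPolydisc R) (interior W),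
      IsInfWedge V' W' ∧
      (∀ α β, ∃ h C : ℝ, 0 < h ∧ 0 < C ∧ ∀ p ∈ W',
        ‖mixedDeriv α β (fun p => f p - cauchyIntegral R f p) p‖ ≤
          C * Real.exp (-h * eucNorm p.2)) ∧
      ∀ h : ℝ, 0 < h → ExpBoundOn h W' (cauchyIntegral R f) := by
  obtain ⟨X, hXW, hX, hwedge, hinfra, hdecay⟩ := hf.exists_isOpen_expBoundOn hΓ hRr hcone hV'
  set S := tube (closedPolydisc R) X
  have hS : IsOpen S := isOpen_tube (isCompact_closedPolydisc R) hX
  have hSX : closedPolydisc R ×ˢ S ⊆ X := prod_tube_subset _ X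
  have hV'sub := hV'.subset (isCone_prod (polydisc r') hΓcone)
  have hr'R := closedPolydisc_subset_polydisc hr'
  have hW' : V' ∩ Prod.snd ⁻¹' S ⊆ closedPolydisc r' ×ˢ S :=
    fun p hp => ⟨polydisc_subset_closedPolydisc r' (hV'sub hp.1).1, hp.2⟩
  refine ⟨_, inter_subset_inter hV'sub (preimage_mono (tube_mono (interior_maximal hXW hX))),
    hwedge, fun α β => ?_, fun h hh => ?_⟩
  · obtain ⟨h, hh, C, hC, hb⟩ := locExpDecay_mixedDeriv_sub_cauchyIntegral hR hX hS
      (hf.2.1.1.mono hXW) hSX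
      (fun w hw _ hζ => hf.2.1.differentiableAt_snd (p := (w, _)) hX hXW (hSX ⟨hw, hζ⟩))
      (fun α β h hh => (hinfra α β h hh).mono hSX)
      (fun i => (hdecay i).imp fun _ hh => ⟨hh.1, hh.2.mono hSX⟩) α β _ hr'R
      (isCompact_closedPolydisc r')
    exact ⟨h, C, hh, hC, fun p hp => hb p (hW' hp)⟩
  · have hf0 : ∀ h : ℝ, 0 < h → ExpBoundOn h (closedPolydisc R ×ˢ S) f := fun h hh =>
      mixedDeriv_zero_zero f ▸ (hinfra 0 0 h hh).mono hSX
    exact (locInfraExp_cauchyIntegral hR hf0 _ hr'R (isCompact_closedPolydisc r') h hh).mono hW'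

theorem symbolInf_holomorphic_representative_general (hr' : ∀ i, 0 ≤ r' i) (hrr' : ∀ i, r' i < r i)
    (hΓ : IsOpen Γ) (hΓcone : ∀ ζ ∈ Γ, ∀ t : ℝ, 0 < t → t • ζ ∈ Γ)
    (hf : IsSymbolInf (polydisc r ×ˢ Γ) W f) :
    ∃ (g : Pt n → ℂ) (Wg : Set (Pt n)), IsNullSymbolInf (polydisc r' ×ˢ Γ) Wg g ∧
      ∃ Ws : Set (Pt n), IsSymbol (polydisc r' ×ˢ Γ) Ws (fun x => f x - g x) := by
  choose R hr'R hRr using fun i => exists_between (hrr' i)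
  have hR i : 0 ≤ R i := (hr' i).trans (hr'R i).le
  set W₀ := (polydisc r' ×ˢ Γ) ∩ Prod.snd ⁻¹' tube (closedPolydisc R) (interior W)
  have hW₀ : W₀ ⊆ polydisc R ×ˢ tube (closedPolydisc R) (interior W) := fun p hp =>
    ⟨closedPolydisc_subset_polydisc hr'R (polydisc_subset_closedPolydisc r' hp.1.1), hp.2⟩
  have hwedge : IsInfWedge (polydisc r' ×ˢ Γ) W₀ :=
    isInfWedge_inter_tube (isCompact_closedPolydisc R) (isCone_prod _ hΓcone)
      (prod_mono (closedPolydisc_subset_polydisc hRr) (image_subset_iff.2 fun _ hp => hp.2))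
      (isInfWedge_interior ((isOpen_polydisc r).prod hΓ) hf.1)
  have hlocal {V' : Set (Pt n)} (hcone : IsCone V') (hV' : ConeRelCpt V' (polydisc r' ×ˢ Γ)) :=
    hf.exists_isInfWedge_bounds_cauchyIntegral hΓ hΓcone hR hr'R hRr hcone hV'
  refine ⟨fun p => f p - cauchyIntegral R f p, W₀,
    ⟨hwedge, (hf.2.1.sub_cauchyIntegral hR).mono hW₀, fun V' _ hcone hV' => ?_⟩, W₀, ?_⟩
  · obtain ⟨W', hW', hwedge', hdecay, -⟩ := hlocal hcone hV'
    exact ⟨W', hW', hwedge', hdecay⟩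
  · simp only [sub_sub_cancel]
    refine ⟨hwedge, (hf.2.1.differentiableOn_cauchyIntegral hR).mono hW₀, fun V' _ hcone hV' => ?_⟩
    obtain ⟨W', hW', hwedge', -, hinfra⟩ := hlocal hcone hV'
    exact ⟨W', hW', hwedge', hinfra⟩

end Representative

/-- (Surjectivity on stalks of `ι : 𝔖/𝔑 → 𝔖^∞/𝔑^∞`.) For every symbol
of `C^∞`-type `f ∈ 𝔖^∞(D × Γ)` there are a polydisc `D'` with closure contained in `D`
and `g ∈ 𝔑^∞(D' × Γ)` such that `f − g` is holomorphic on an infinitesimal wedge of type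
`D' × Γ` and `f − g ∈ 𝔖(D' × Γ)`. -/
theorem symbolInf_holomorphic_representative {n : ℕ}
    (r : Fin n → ℝ) (hr : ∀ i, 0 < r i)
    (Γ : Set (Cn n)) (hΓopen : IsOpen Γ) (hΓ0 : (0 : Cn n) ∉ Γ)
    (hΓcone : ∀ ζ ∈ Γ, ∀ t : ℝ, 0 < t → t • ζ ∈ Γ) (hΓconv : Convex ℝ Γ)
    (D : Set (Cn n)) (hD : D = {z : Cn n | ∀ i, ‖z i‖ < r i})
    (f : Pt n → ℂ) (W : Set (Pt n)) (hf : IsSymbolInf (D ×ˢ Γ) W f) :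
    ∃ (c : Cn n) (r' : Fin n → ℝ), (∀ i, 0 < r' i) ∧
      {z : Cn n | ∀ i, ‖z i - c i‖ ≤ r' i} ⊆ D ∧
      ∃ (g : Pt n → ℂ) (Wg : Set (Pt n)),
        IsNullSymbolInf ({z : Cn n | ∀ i, ‖z i - c i‖ < r' i} ×ˢ Γ) Wg g ∧
        ∃ Ws : Set (Pt n),
          IsSymbol ({z : Cn n | ∀ i, ‖z i - c i‖ < r' i} ×ˢ Γ) Ws
            (fun x => f x - g x) := by
  subst hD
  have hD' : {z : Cn n | ∀ i, ‖z i - (0 : Cn n) i‖ < r i / 2} = polydisc fun i => r i / 2 := by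
    simp [polydisc]
  refine ⟨0, fun i => r i / 2, fun i => half_pos (hr i), fun z hz i => ?_, ?_⟩
  · simpa using (hz i).trans_lt (half_lt_self (hr i))
  · rw [hD']
    exact symbolInf_holomorphic_representative_general (fun i => (half_pos (hr i)).le)
      (fun i => half_lt_self (hr i)) hΓopen hΓcone hf
end
end

section
/- Let n ≥ 1, r ≥ 1, I = {1,…,n}, and let A be an additive commutative group. Suppose P : I^{r+1} × I^{r} → A satisfies: P(u,v) = 0 whenever the tuple u has two equal entries or the tuple v has two equal entries; P changes sign when two adjacent entries of u are interchanged; and P changes sign when two adjacent entries of v are interchanged. Let I^{(k)} denote the set of weakly increasing k-tuples with entries in I. Then Σ_{α ∈ I^{(r)}} Σ_{i=1}^{n} P(α⌢i, α) = Σ_{β ∈ I^{(r+1)}} Σ_{j=1}^{r+1} (−1)^{r+1−j} P(β, β_ǰ), where α⌢i denotes the (r+1)-tuple obtained by appending i as the last entry of α, and β_ǰ denotes the r-tuple obtained by deleting the j-th entry of β. -/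
open scoped Classical

/-!
Moving the `j`-th entry of an `(r + 1)`-tuple `β` to the end is a cycle of sign `(-1) ^ (r - j)`
(counting from `0`), so the summand on the right is `P(β_ǰ⌢β_j, β_ǰ)`. Vanishing on repeated
entries restricts both sides to strictly increasing tuples, with `i` not an entry of `α` on the
left, and deleting an entry, `(β, j) ↦ (β_ǰ, β_j)`, is a bijection between the two index sets.
-/

section Alternating

variable {ι A : Type*} [AddCommGroup A] {r : ℕ}

theorem map_comp_perm_eq_sign_smul {f : (Fin (r + 1) → ι) → A}
    (hf : ∀ u (k : Fin r), f (u ∘ Equiv.swap k.castSucc k.succ) = -f u)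
    (σ : Equiv.Perm (Fin (r + 1))) (u : Fin (r + 1) → ι) :
    f (u ∘ σ) = Equiv.Perm.sign σ • f u := by
  have hσ : σ ∈ Submonoid.closure (Set.range fun k : Fin r ↦ Equiv.swap k.castSucc k.succ) := by
    simp only [Equiv.Perm.mclosure_swap_castSucc_succ, Submonoid.mem_top]
  induction hσ using Submonoid.closure_induction generalizing u with
  | mem τ hτ =>
    obtain ⟨k, rfl⟩ := hτ
    simp [hf, Equiv.Perm.sign_swap k.castSucc_lt_succ.ne]
  | one => simp
  | mul τ ρ _ _ hτ hρ =>
    rw [Equiv.Perm.coe_mul, ← Function.comp_assoc, hρ, hτ, smul_smul, map_mul, mul_comm]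

theorem snoc_comp_succAbove_eq_comp_cycleIcc (u : Fin (r + 1) → ι) (j : Fin (r + 1)) :
    (Fin.snoc (u ∘ j.succAbove) (u j) : Fin (r + 1) → ι) =
      u ∘ Fin.cycleIcc j (Fin.last r) := by
  rw [← Fin.insertNth_last', Fin.insertNth_eq_iff]
  constructor
  · rw [Function.comp_apply, Fin.cycleIcc_of_last j.le_last]
  · rw [← Fin.cycleIcc_comp_succAbove j (Fin.last r) j.le_last]
    rfl

theorem map_snoc_comp_succAbove {f : (Fin (r + 1) → ι) → A}
    (hf : ∀ u (k : Fin r), f (u ∘ Equiv.swap k.castSucc k.succ) = -f u)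
    (u : Fin (r + 1) → ι) (j : Fin (r + 1)) :
    f (Fin.snoc (u ∘ j.succAbove) (u j)) = ((-1 : ℤ) ^ (r - (j : ℕ))) • f u := by
  rw [snoc_comp_succAbove_eq_comp_cycleIcc, map_comp_perm_eq_sign_smul hf,
    Fin.sign_cycleIcc_of_le j.le_last, Units.smul_def]
  simp

end Alternating

section Deletion

variable {ι : Type*} {r : ℕ}

theorem insert_range_comp_succAbove (u : Fin (r + 1) → ι) (j : Fin (r + 1)) :
    insert (u j) (Set.range (u ∘ j.succAbove)) = Set.range u := by
  rw [Set.range_comp, Fin.range_succAbove, Set.insert_image_compl_eq_range]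

theorem apply_notMem_range_comp_succAbove {u : Fin (r + 1) → ι} (hu : Function.Injective u)
    (j : Fin (r + 1)) : u j ∉ Set.range (u ∘ j.succAbove) := by
  rintro ⟨k, hk⟩
  exact j.succAbove_ne k (hu hk)

theorem eq_and_eq_of_comp_succAbove_eq [PartialOrder ι] {β γ : Fin (r + 1) → ι}
    (hβ : StrictMono β) (hγ : StrictMono γ) {j k : Fin (r + 1)}
    (hdel : β ∘ j.succAbove = γ ∘ k.succAbove) (hentry : β j = γ k) : β = γ ∧ j = k := by
  have hβγ : β = γ := by
    rw [← hβ.range_inj hγ, ← insert_range_comp_succAbove β j, ← insert_range_comp_succAbove γ k,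
      hdel, hentry]
  subst hβγ
  exact ⟨rfl, hβ.injective hentry⟩

variable [LinearOrder ι]

theorem exists_strictMono_comp_succAbove_eq {α : Fin r → ι} (hα : StrictMono α) {i : ι}
    (hi : i ∉ Set.range α) :
    ∃ (β : Fin (r + 1) → ι) (j : Fin (r + 1)), StrictMono β ∧ β ∘ j.succAbove = α ∧ β j = i := by
  set u : Fin (r + 1) → ι := Fin.snoc α i with hu
  have hu_inj : Function.Injective u := Fin.snoc_injective_iff.2 ⟨hα.injective, hi⟩
  set β := u ∘ Tuple.sort u with hβ
  have hβ_strict : StrictMono β :=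
    (Tuple.monotone_sort u).strictMono_of_injective (hu_inj.comp (Tuple.sort u).injective)
  have hβ_range : Set.range β = insert i (Set.range α) := by
    rw [hβ, (Tuple.sort u).surjective.range_comp, hu, Fin.range_snoc]
  obtain ⟨j, hj⟩ : i ∈ Set.range β := hβ_range ▸ Set.mem_insert i _
  have hdel_range : Set.range (β ∘ j.succAbove) = Set.range α := by
    have hi_del : i ∉ Set.range (β ∘ j.succAbove) :=
      hj ▸ apply_notMem_range_comp_succAbove hβ_strict.injective j
    have hinsert : insert i (Set.range (β ∘ j.succAbove)) = insert i (Set.range α) := by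
      rw [← hβ_range, ← hj, insert_range_comp_succAbove]
    rw [← Set.insert_sdiff_self_of_notMem hi_del, hinsert, Set.insert_sdiff_self_of_notMem hi]
  exact ⟨β, j, hβ_strict,
    ((hβ_strict.comp j.strictMono_succAbove).range_inj hα).1 hdel_range, hj⟩

variable [Fintype ι]

theorem sum_strictMono_comp_succAbove {M : Type*} [AddCommMonoid M] (f : (Fin r → ι) → ι → M) :
    ∑ β : Fin (r + 1) → ι with StrictMono β, ∑ j, f (β ∘ j.succAbove) (β j) =
      ∑ α : Fin r → ι with StrictMono α, ∑ i with i ∉ Set.range α, f α i := by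
  rw [Finset.sum_sigma', Finset.sum_sigma']
  refine Finset.sum_bij (fun x _ ↦ ⟨x.1 ∘ x.2.succAbove, x.1 x.2⟩) ?_ ?_ ?_ fun _ _ ↦ rfl
  · rintro ⟨β, j⟩ hβ
    simp only [Finset.mem_sigma, Finset.mem_filter_univ, Finset.mem_univ, and_true] at hβ ⊢
    exact ⟨hβ.comp j.strictMono_succAbove, apply_notMem_range_comp_succAbove hβ.injective j⟩
  · rintro ⟨β, j⟩ hβ ⟨γ, k⟩ hγ heq
    simp only [Finset.mem_sigma, Finset.mem_filter_univ, Finset.mem_univ, and_true] at hβ hγ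
    simp only [Sigma.mk.injEq, heq_eq_eq] at heq
    obtain ⟨rfl, rfl⟩ := eq_and_eq_of_comp_succAbove_eq hβ hγ heq.1 heq.2
    rfl
  · rintro ⟨α, i⟩ hαi
    simp only [Finset.mem_sigma, Finset.mem_filter_univ] at hαi
    obtain ⟨β, j, hβ, rfl, rfl⟩ := exists_strictMono_comp_succAbove_eq hαi.1 hαi.2
    exact ⟨⟨β, j⟩, by simpa using hβ, rfl⟩

end Deletion

theorem sum_monotone_eq_sum_strictMono {κ ι M : Type*} [PartialOrder κ] [PartialOrder ι]
    [Fintype (κ → ι)] [DecidablePred fun u : κ → ι ↦ Monotone u]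
    [DecidablePred fun u : κ → ι ↦ StrictMono u] [AddCommMonoid M] {g : (κ → ι) → M}
    (hg : ∀ u, ¬Function.Injective u → g u = 0) :
    ∑ u with Monotone u, g u = ∑ u with StrictMono u, g u := by
  symm
  refine Finset.sum_subset (Finset.monotone_filter_right _ fun u _ hu ↦ hu.monotone) ?_
  intro u hmono hstrict
  rw [Finset.mem_filter_univ] at hmono hstrict
  exact hg u fun hinj ↦ hstrict (hmono.strictMono_of_injective hinj)

theorem combi_reindexing_general {ι A : Type*} [LinearOrder ι] [Fintype ι] [AddCommGroup A]
    {r : ℕ} (P : (Fin (r + 1) → ι) → (Fin r → ι) → A)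
    (hzero : ∀ u v, ¬Function.Injective u → P u v = 0)
    (hswap : ∀ u v (k : Fin r), P (u ∘ Equiv.swap k.castSucc k.succ) v = -P u v) :
    ∑ α : Fin r → ι with Monotone α, ∑ i, P (Fin.snoc α i) α =
      ∑ β : Fin (r + 1) → ι with Monotone β,
        ∑ j : Fin (r + 1), ((-1 : ℤ) ^ (r - (j : ℕ))) • P β (β ∘ j.succAbove) := by
  have hzero_snoc : ∀ α i, ¬(Function.Injective α ∧ i ∉ Set.range α) → P (Fin.snoc α i) α = 0 :=
    fun α i h ↦ hzero _ _ (mt Fin.snoc_injective_iff.1 h)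
  calc ∑ α : Fin r → ι with Monotone α, ∑ i, P (Fin.snoc α i) α
    _ = ∑ α : Fin r → ι with StrictMono α, ∑ i, P (Fin.snoc α i) α :=
      sum_monotone_eq_sum_strictMono fun α hα ↦
        Finset.sum_eq_zero fun i _ ↦ hzero_snoc α i fun h ↦ hα h.1
    _ = ∑ α : Fin r → ι with StrictMono α, ∑ i with i ∉ Set.range α, P (Fin.snoc α i) α :=
      Finset.sum_congr rfl fun α _ ↦ (Finset.sum_filter_of_ne (p := (· ∉ Set.range α))
        fun i _ hne hi ↦ hne (hzero_snoc α i fun h ↦ h.2 hi)).symm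
    _ = ∑ β : Fin (r + 1) → ι with StrictMono β,
          ∑ j, P (Fin.snoc (β ∘ j.succAbove) (β j)) (β ∘ j.succAbove) :=
      (sum_strictMono_comp_succAbove fun α i ↦ P (Fin.snoc α i) α).symm
    _ = ∑ β : Fin (r + 1) → ι with StrictMono β,
          ∑ j : Fin (r + 1), ((-1 : ℤ) ^ (r - (j : ℕ))) • P β (β ∘ j.succAbove) :=
      Finset.sum_congr rfl fun β _ ↦ Finset.sum_congr rfl fun j _ ↦
        map_snoc_comp_succAbove (f := (P · (β ∘ j.succAbove))) (fun u ↦ hswap u _) β j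
    _ = _ := by
      refine (sum_monotone_eq_sum_strictMono fun β hβ ↦ Finset.sum_eq_zero fun j _ ↦ ?_).symm
      rw [hzero β _ hβ, smul_zero]

/-- (Reindexing lemma `combi` of the appendix.) Let `I = {1, …, n}` and
let `P : I^{r+1} × I^r → A` vanish on tuples with repeated entries and change sign under
interchanges of adjacent entries in either argument.  Then
`∑_{α ∈ I^{(r)}} ∑_{i=1}^n P(α⌢i, α)
  = ∑_{β ∈ I^{(r+1)}} ∑_{j=1}^{r+1} (−1)^{r+1−j} P(β, β_ǰ)`,
where `I^{(k)}` is the set of weakly increasing `k`-tuples, `α⌢i` appends `i` at the end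
of `α`, and `β_ǰ` deletes the `j`-th entry of `β`. -/
theorem combi_reindexing {n r : ℕ} (hn : 1 ≤ n) (hr : 1 ≤ r)
    (A : Type*) [AddCommGroup A]
    (P : (Fin (r + 1) → Fin n) → (Fin r → Fin n) → A)
    (hzero : ∀ (u : Fin (r + 1) → Fin n) (v : Fin r → Fin n),
      ((∃ i j, i ≠ j ∧ u i = u j) ∨ (∃ i j, i ≠ j ∧ v i = v j)) → P u v = 0)
    (hswap_u : ∀ (u : Fin (r + 1) → Fin n) (v : Fin r → Fin n)
      (k : ℕ) (hk : k + 1 < r + 1),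
      P (u ∘ Equiv.swap (⟨k, Nat.lt_of_succ_lt hk⟩ : Fin (r + 1)) ⟨k + 1, hk⟩) v
        = -P u v)
    (hswap_v : ∀ (u : Fin (r + 1) → Fin n) (v : Fin r → Fin n)
      (k : ℕ) (hk : k + 1 < r),
      P u (v ∘ Equiv.swap (⟨k, Nat.lt_of_succ_lt hk⟩ : Fin r) ⟨k + 1, hk⟩)
        = -P u v) :
    ∑ α ∈ Finset.univ.filter (fun α : Fin r → Fin n => Monotone α),
      ∑ i : Fin n, P (Fin.snoc α i) α
    = ∑ β ∈ Finset.univ.filter (fun β : Fin (r + 1) → Fin n => Monotone β),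
        ∑ j : Fin (r + 1), ((-1 : ℤ) ^ (r - (j : ℕ))) • P β (β ∘ j.succAbove) := by
  refine combi_reindexing_general P (fun u v hu ↦ hzero u v (Or.inl ?_))
    fun u v k ↦ hswap_u u v k k.succ.isLt
  simpa only [Function.not_injective_iff, and_comm] using hu
end

section
/- Let K ⊂ ℂ^n be a compact set, B ⊂ ℂ^n a bounded open set, Γ ⊆ ℂ^n∖{0} a cone, and c > 0, and suppose Re⟨z'−z, ζ⟩ ≤ −c·|ζ| for all z ∈ B, z' ∈ K, ζ ∈ Γ. Let ω be a C^∞ function on an open neighborhood of (closure of B)×K in ℂ^n×ℂ^n ≅ ℝ^{4n}. Define F(z,ζ) = ∫_K ω(z,z')·e^{⟨z'−z,ζ⟩} dλ(z'), where λ is Lebesgue measure on ℂ^n ≅ ℝ^{2n}. Then F is C^∞ in z and holomorphic in ζ on B×Γ, and for all multi-indices α,β ∈ ℤ^n_{≥0} there exist constants C > 0 and h > 0 such that |∂^α_z ∂^β_{z̄} F(z,ζ)| ≤ C·e^{−h|ζ|} for all (z,ζ) ∈ B×Γ. -/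
open Complex MeasureTheory

noncomputable section

/-- The bilinear pairing `⟨w, ζ⟩ = ∑ᵢ wᵢ ζᵢ`. -/
def cpair {n : ℕ} (w ζ : Cn n) : ℂ := ∑ i, w i * ζ i

/-!
Differentiating under the integral sign gives
`D_v F_ω (z, ζ) = F_{D_v ω} (z, ζ) - ⟨v, ζ⟩ F_ω (z, ζ)` for every direction `v` in the `z` variable,
so all `z`-derivatives of `F_ω` are combinations of fiber integrals of smooth amplitudes with
coefficients polynomial in `ζ`. Each such fiber integral is `O(e^{-c|ζ|})`, because its amplitude is
bounded on the compact set `closure B × K`, and each polynomial factor costs an arbitrarily small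
part of the exponential rate.
-/

open Asymptotics Filter Set
open scoped Topology

section ParametricIntegral

theorem continuousOn_fderiv_comp_inl {P G E : Type*} [NormedAddCommGroup P] [NormedSpace ℝ P]
    [NormedAddCommGroup G] [NormedSpace ℝ G] [NormedAddCommGroup E] [NormedSpace ℝ E]
    {U : Set (P × G)} {Φ : P × G → E} (hU : IsOpen U) (hΦ : ContDiffOn ℝ 1 Φ U) :
    ContinuousOn (fun q => (fderiv ℝ Φ q).comp (.inl ℝ P G)) U :=
  (hΦ.continuousOn_fderiv_of_isOpen hU le_rfl).clm_comp continuousOn_const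

variable {G P E : Type*} [MeasurableSpace G] [NormedAddCommGroup P] [NormedAddCommGroup E]
  [NormedSpace ℝ E] {K : Set G} {S : Set P}

section Topological

variable [TopologicalSpace G] [T2Space G] [OpensMeasurableSpace G] [LocallyCompactSpace P]
  {μ : Measure G} [IsFiniteMeasureOnCompacts μ] {Φ : P → G → E}

theorem continuousOn_setIntegral_of_isCompact (hK : IsCompact K) (hS : IsOpen S)
    (hΦ : ContinuousOn (fun q : P × G => Φ q.1 q.2) (S ×ˢ K)) :
    ContinuousOn (fun p => ∫ t in K, Φ p t ∂μ) S := by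
  intro p hp
  obtain ⟨N, hN, hpN, hNS⟩ := exists_compact_subset hS hp
  obtain ⟨M, hM⟩ := (hN.prod hK).exists_bound_of_continuousOn
    (hΦ.mono (prod_mono hNS subset_rfl))
  have hN_nhds : N ∈ 𝓝 p := mem_interior_iff_mem_nhds.1 hpN
  refine (continuousAt_of_dominated (bound := fun _ => M) ?_ ?_
    (integrableOn_const hK.measure_ne_top) ?_).continuousWithinAt
  · filter_upwards [hS.mem_nhds hp] with x hx
    exact (hΦ.uncurry_left x hx).aestronglyMeasurable_of_isCompact hK hK.measurableSet
  · filter_upwards [hN_nhds] with x hx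
    filter_upwards [ae_restrict_mem hK.measurableSet] with t ht
    exact hM (x, t) ⟨hx, ht⟩
  · filter_upwards [ae_restrict_mem hK.measurableSet] with t ht
    exact (hΦ.uncurry_right t ht).continuousAt (hS.mem_nhds hp)

theorem hasFDerivAt_setIntegral_of_isCompact {𝕜 : Type*} [RCLike 𝕜] [NormedSpace 𝕜 P]
    [NormedSpace 𝕜 E] {Φ' : P → G → P →L[𝕜] E} (hK : IsCompact K) (hS : IsOpen S)
    (hΦ : ∀ p ∈ S, ContinuousOn (Φ p) K)
    (hΦ' : ContinuousOn (fun q : P × G => Φ' q.1 q.2) (S ×ˢ K))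
    (hderiv : ∀ p ∈ S, ∀ t ∈ K, HasFDerivAt (Φ · t) (Φ' p t) p) {p : P} (hp : p ∈ S) :
    HasFDerivAt (fun p => ∫ t in K, Φ p t ∂μ) (∫ t in K, Φ' p t ∂μ) p := by
  obtain ⟨N, hN, hpN, hNS⟩ := exists_compact_subset hS hp
  obtain ⟨M, hM⟩ := (hN.prod hK).exists_bound_of_continuousOn
    (hΦ'.mono (prod_mono hNS subset_rfl))
  refine hasFDerivAt_integral_of_dominated_of_fderiv_le (bound := fun _ => M)
    (mem_interior_iff_mem_nhds.1 hpN) ?_ ((hΦ p hp).integrableOn_compact hK)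
    ((hΦ'.uncurry_left p hp).aestronglyMeasurable_of_isCompact hK hK.measurableSet) ?_
    (integrableOn_const hK.measure_ne_top) ?_
  · filter_upwards [hS.mem_nhds hp] with x hx
    exact (hΦ x hx).aestronglyMeasurable_of_isCompact hK hK.measurableSet
  · filter_upwards [ae_restrict_mem hK.measurableSet] with t ht x hx
    exact hM (x, t) ⟨hx, ht⟩
  · filter_upwards [ae_restrict_mem hK.measurableSet] with t ht x hx
    exact hderiv x (hNS hx) t ht

end Topological

variable [NormedAddCommGroup G] [NormedSpace ℝ G] [OpensMeasurableSpace G] [NormedSpace ℝ P]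
  {μ : Measure G} [IsFiniteMeasureOnCompacts μ] {U : Set (P × G)} {Φ : P × G → E}

theorem hasFDerivAt_setIntegral_of_contDiffOn_s9 [LocallyCompactSpace P] (hK : IsCompact K)
    (hS : IsOpen S) (hU : IsOpen U) (hSK : S ×ˢ K ⊆ U) (hΦ : ContDiffOn ℝ 1 Φ U)
    {p : P} (hp : p ∈ S) :
    HasFDerivAt (fun p => ∫ t in K, Φ (p, t) ∂μ)
      (∫ t in K, (fderiv ℝ Φ (p, t)).comp (.inl ℝ P G) ∂μ) p := by
  refine hasFDerivAt_setIntegral_of_isCompact (Φ := fun p t => Φ (p, t))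
    (Φ' := fun p t => (fderiv ℝ Φ (p, t)).comp (.inl ℝ P G)) hK hS
    (fun x hx => ContinuousOn.uncurry_left (f := fun p t => Φ (p, t)) x hx
      (hΦ.continuousOn.mono hSK))
    ((continuousOn_fderiv_comp_inl hU hΦ).mono hSK) (fun x hx t ht => ?_) hp
  have hΦ_at : DifferentiableAt ℝ Φ (x, t) :=
    (hΦ.differentiableOn one_ne_zero).differentiableAt (hU.mem_nhds (hSK ⟨hx, ht⟩))
  exact hΦ_at.hasFDerivAt.comp x (hasFDerivAt_prodMk_left x t)

theorem fderiv_setIntegral_apply [LocallyCompactSpace P] [CompleteSpace E] (hK : IsCompact K)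
    (hS : IsOpen S) (hU : IsOpen U) (hSK : S ×ˢ K ⊆ U) (hΦ : ContDiffOn ℝ 1 Φ U)
    {p : P} (hp : p ∈ S) (v : P) :
    fderiv ℝ (fun p => ∫ t in K, Φ (p, t) ∂μ) p v = ∫ t in K, fderiv ℝ Φ (p, t) (v, 0) ∂μ := by
  have hint : IntegrableOn (fun t => (fderiv ℝ Φ (p, t)).comp (.inl ℝ P G)) K μ :=
    (ContinuousOn.uncurry_left (f := fun p t => (fderiv ℝ Φ (p, t)).comp (.inl ℝ P G)) p hp
      ((continuousOn_fderiv_comp_inl hU hΦ).mono hSK)).integrableOn_compact hK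
  rw [(hasFDerivAt_setIntegral_of_contDiffOn_s9 hK hS hU hSK hΦ hp).fderiv,
    ContinuousLinearMap.integral_apply hint]
  simp only [ContinuousLinearMap.comp_apply, ContinuousLinearMap.inl_apply]

theorem contDiffOn_setIntegral_s9 [FiniteDimensional ℝ P] [CompleteSpace E] {k : ℕ∞}
    (hK : IsCompact K) (hS : IsOpen S) (hU : IsOpen U) (hSK : S ×ˢ K ⊆ U)
    (hΦ : ContDiffOn ℝ k Φ U) : ContDiffOn ℝ k (fun p => ∫ t in K, Φ (p, t) ∂μ) S := by
  refine contDiffOn_iff_forall_nat_le.2 fun m hm => ?_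
  replace hΦ : ContDiffOn ℝ m Φ U := hΦ.of_le (mod_cast hm)
  clear hm
  induction m generalizing Φ with
  | zero =>
    exact contDiffOn_zero.2 (continuousOn_setIntegral_of_isCompact (Φ := fun p t => Φ (p, t)) hK hS
      (hΦ.continuousOn.mono hSK))
  | succ m ih =>
    rw [Nat.cast_succ] at hΦ ⊢
    have hΦ1 : ContDiffOn ℝ 1 Φ U := hΦ.of_le le_add_self
    rw [contDiffOn_succ_iff_fderiv_apply hS.uniqueDiffOn]
    refine ⟨fun p hp => (hasFDerivAt_setIntegral_of_contDiffOn_s9 hK hS hU hSK hΦ1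
      hp).differentiableAt.differentiableWithinAt, by simp, fun v => ?_⟩
    refine (ih ((hΦ.fderiv_of_isOpen hU le_rfl).clm_apply
      (contDiffOn_const (c := (v, 0))))).congr fun p hp => ?_
    rw [fderivWithin_of_isOpen hS hp, fderiv_setIntegral_apply hK hS hU hSK hΦ1 hp]

end ParametricIntegral

variable {n : ℕ}

section Pairing

/-- The pairing `cpair` as a continuous `ℂ`-bilinear map. -/
def cpairL : Cn n →L[ℂ] Cn n →L[ℂ] ℂ :=
  ∑ i, (ContinuousLinearMap.mul ℂ ℂ).bilinearComp (.proj i) (.proj i)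

theorem cpairL_apply (w ζ : Cn n) : cpairL w ζ = cpair w ζ := by
  simp [cpairL, cpair]

theorem contDiff_cpair_sub {k : WithTop ℕ∞} :
    ContDiff ℝ k fun q : Pt n × Cn n => cpair (q.2 - q.1.1) q.1.2 := by
  unfold cpair
  fun_prop

theorem fderiv_cpair_sub_apply (q : Pt n × Cn n) (v : Cn n) :
    fderiv ℝ (fun q : Pt n × Cn n => cpair (q.2 - q.1.1) q.1.2) q ((v, 0), 0) =
      -cpair v q.1.2 := by
  have hphase := (cpairL (n := n).hasFDerivAt_of_bilinear
    (hasFDerivAt_snd.fun_sub hasFDerivAt_fst.fst) (hasFDerivAt_fst (p := q)).snd).restrictScalars ℝ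
  simp only [← cpairL_apply, hphase.fderiv]
  simp

theorem norm_le_eucNorm (ζ : Cn n) : ‖ζ‖ ≤ eucNorm ζ := by
  refine (pi_norm_le_iff_of_nonneg (Real.sqrt_nonneg _)).2 fun i => Real.le_sqrt_of_sq_le ?_
  rw [← normSq_eq_norm_sq]
  exact Finset.single_le_sum (f := fun i => normSq (ζ i)) (fun j _ => normSq_nonneg _)
    (Finset.mem_univ i)

theorem norm_cpair_le (v ζ : Cn n) : ‖cpair v ζ‖ ≤ ‖cpairL v‖ * eucNorm ζ := by
  rw [← cpairL_apply]
  exact (cpairL v).le_opNorm_of_le (norm_le_eucNorm ζ)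

theorem isBigO_cpair_exp (v : Cn n) {ε : ℝ} (hε : 0 < ε) :
    cpair v =O[⊤] fun ζ => Real.exp (ε * eucNorm ζ) := by
  refine isBigO_top.2 ⟨‖cpairL v‖ * ε⁻¹, fun ζ => ?_⟩
  have eucNorm_le : eucNorm ζ ≤ ε⁻¹ * Real.exp (ε * eucNorm ζ) := by
    rw [le_inv_mul_iff₀ hε]
    linarith [Real.add_one_le_exp (ε * eucNorm ζ)]
  calc ‖cpair v ζ‖ ≤ ‖cpairL v‖ * eucNorm ζ := norm_cpair_le v ζ
    _ ≤ ‖cpairL v‖ * (ε⁻¹ * Real.exp (ε * eucNorm ζ)) := by gcongr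
    _ = ‖cpairL v‖ * ε⁻¹ * ‖Real.exp (ε * eucNorm ζ)‖ := by
      rw [Real.norm_of_nonneg (Real.exp_pos _).le, mul_assoc]

theorem hasFDerivAt_cpair_snd (w : Cn n) (p : Pt n) :
    HasFDerivAt (fun p : Pt n => cpair w p.2)
      (((cpairL w).comp (.snd ℂ (Cn n) (Cn n))).restrictScalars ℝ) p := by
  simp only [← cpairL_apply]
  exact ((cpairL w).restrictScalars ℝ).hasFDerivAt.comp p hasFDerivAt_snd

end Pairing

section FiberIntegral

/-- The integrand `ω(z, z') e^{⟨z' - z, ζ⟩}` of the fiber integral at `q = ((z, ζ), z')`. -/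
def fiberIntegrand (ω : Pt n → ℂ) (q : Pt n × Cn n) : ℂ :=
  ω (q.1.1, q.2) * exp (cpair (q.2 - q.1.1) q.1.2)

/-- The fiber integral `F_ω(z, ζ) = ∫_K ω(z, z') e^{⟨z' - z, ζ⟩} dμ(z')` of the amplitude `ω`,
at `p = (z, ζ)`. -/
def fiberIntegral (μ : Measure (Cn n)) (K : Set (Cn n)) (ω : Pt n → ℂ) (p : Pt n) : ℂ :=
  ∫ z' in K, fiberIntegrand ω (p, z') ∂μ

/-- The points `((z, ζ), z')` with `(z, z') ∈ O`, over which the integrand with amplitude defined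
on `O` lives. -/
def fiberDomain (O : Set (Pt n)) : Set (Pt n × Cn n) :=
  {q | (q.1.1, q.2) ∈ O}

variable {K B Γ : Set (Cn n)} {O : Set (Pt n)} {ω : Pt n → ℂ}

theorem isOpen_fiberDomain (hO : IsOpen O) : IsOpen (fiberDomain O) :=
  hO.preimage (by fun_prop : Continuous fun q : Pt n × Cn n => (q.1.1, q.2))

theorem preimage_fst_prod_subset_fiberDomain (hBK : B ×ˢ K ⊆ O) :
    (Prod.fst ⁻¹' B) ×ˢ K ⊆ fiberDomain O :=
  fun _ hq => hBK hq

theorem contDiffOn_fiberIntegrand {k : WithTop ℕ∞} (hω : ContDiffOn ℝ k ω O) :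
    ContDiffOn ℝ k (fiberIntegrand ω) (fiberDomain O) := by
  have hamplitude : ContDiffOn ℝ k (fun q : Pt n × Cn n => ω (q.1.1, q.2)) (fiberDomain O) :=
    hω.comp (by fun_prop : ContDiff ℝ k fun q : Pt n × Cn n => (q.1.1, q.2)).contDiffOn
      fun _ hq => hq
  exact hamplitude.mul contDiff_cpair_sub.cexp.contDiffOn

theorem fderiv_fiberIntegrand_apply {q : Pt n × Cn n} (hω : DifferentiableAt ℝ ω (q.1.1, q.2))
    (v : Cn n) :
    fderiv ℝ (fiberIntegrand ω) q ((v, 0), 0) =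
      fiberIntegrand (fun x => fderiv ℝ ω x (v, 0)) q - cpair v q.1.2 * fiberIntegrand ω q := by
  let π : Pt n × Cn n →L[ℝ] Pt n :=
    ((ContinuousLinearMap.fst ℝ _ _).comp (.fst ℝ _ _)).prod (.snd ℝ _ _)
  have hamplitude : HasFDerivAt (fun q : Pt n × Cn n => ω (q.1.1, q.2))
      ((fderiv ℝ ω (q.1.1, q.2)).comp π) q :=
    hω.hasFDerivAt.comp (f := π) q π.hasFDerivAt
  have hphase : DifferentiableAt ℝ (fun q : Pt n × Cn n => cpair (q.2 - q.1.1) q.1.2) q :=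
    (contDiff_cpair_sub (k := 1)).differentiable one_ne_zero q
  have hprod : HasFDerivAt (fiberIntegrand ω) _ q := hamplitude.fun_mul hphase.hasFDerivAt.cexp
  have hπ : π ((v, 0), 0) = (v, 0) := rfl
  rw [hprod.fderiv]
  simp only [fiberIntegrand, add_apply, smul_apply, smul_eq_mul, ContinuousLinearMap.comp_apply,
    hπ, fderiv_cpair_sub_apply]
  ring

theorem integrableOn_fiberIntegrand {μ : Measure (Cn n)} [IsFiniteMeasureOnCompacts μ]
    (hK : IsCompact K) (hBK : B ×ˢ K ⊆ O) (hω : ContinuousOn ω O) {p : Pt n} (hp : p.1 ∈ B) :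
    IntegrableOn (fun z' => fiberIntegrand ω (p, z')) K μ :=
  ((contDiffOn_fiberIntegrand (contDiffOn_zero.2 hω)).continuousOn.comp
    (by fun_prop : Continuous fun z' => (p, z')).continuousOn
    fun _ hz' => hBK ⟨hp, hz'⟩).integrableOn_compact hK

variable {μ : Measure (Cn n)} [IsFiniteMeasureOnCompacts μ]

theorem contDiffOn_fiberIntegral {k : ℕ∞} (hK : IsCompact K) (hB : IsOpen B) (hO : IsOpen O)
    (hBK : B ×ˢ K ⊆ O) (hω : ContDiffOn ℝ k ω O) :
    ContDiffOn ℝ k (fiberIntegral μ K ω) (Prod.fst ⁻¹' B) :=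
  contDiffOn_setIntegral_s9 hK (hB.preimage continuous_fst) (isOpen_fiberDomain hO)
    (preimage_fst_prod_subset_fiberDomain hBK) (contDiffOn_fiberIntegrand hω)

theorem fderiv_fiberIntegral_apply (hK : IsCompact K) (hB : IsOpen B) (hO : IsOpen O)
    (hBK : B ×ˢ K ⊆ O) (hω : ContDiffOn ℝ 1 ω O) {p : Pt n} (hp : p.1 ∈ B) (v : Cn n) :
    fderiv ℝ (fiberIntegral μ K ω) p (v, 0) =
      fiberIntegral μ K (fun x => fderiv ℝ ω x (v, 0)) p - cpair v p.2 * fiberIntegral μ K ω p := by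
  have hω' : ContinuousOn (fun x => fderiv ℝ ω x (v, 0)) O :=
    (hω.continuousOn_fderiv_of_isOpen hO le_rfl).clm_apply continuousOn_const
  calc fderiv ℝ (fiberIntegral μ K ω) p (v, 0)
    _ = ∫ z' in K, fderiv ℝ (fiberIntegrand ω) (p, z') ((v, 0), 0) ∂μ :=
      fderiv_setIntegral_apply hK (hB.preimage continuous_fst) (isOpen_fiberDomain hO)
        (preimage_fst_prod_subset_fiberDomain hBK) (contDiffOn_fiberIntegrand hω) hp (v, 0)
    _ = ∫ z' in K, (fiberIntegrand (fun x => fderiv ℝ ω x (v, 0)) (p, z') -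
          cpair v p.2 * fiberIntegrand ω (p, z')) ∂μ :=
      setIntegral_congr_fun hK.measurableSet fun z' hz' =>
        fderiv_fiberIntegrand_apply ((hω.differentiableOn one_ne_zero).differentiableAt
          (hO.mem_nhds (hBK ⟨hp, hz'⟩))) v
    _ = fiberIntegral μ K (fun x => fderiv ℝ ω x (v, 0)) p -
          cpair v p.2 * fiberIntegral μ K ω p := by
      rw [integral_sub (integrableOn_fiberIntegrand hK hBK hω' hp)
        ((integrableOn_fiberIntegrand hK hBK hω.continuousOn hp).const_mul _), integral_const_mul]
      rfl

theorem differentiable_fiberIntegral_snd (hK : IsCompact K) {z : Cn n}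
    (hω : ContinuousOn (fun z' => ω (z, z')) K) :
    Differentiable ℂ fun ζ => fiberIntegral μ K ω (z, ζ) := by
  intro ζ
  have hphase : Continuous fun q : Cn n × Cn n => cpair (q.2 - z) q.1 :=
    (contDiff_cpair_sub (k := 0)).continuous.comp
      (by fun_prop : Continuous fun q : Cn n × Cn n => ((z, q.1), q.2))
  have hintegrand : ContinuousOn (fun q : Cn n × Cn n => fiberIntegrand ω ((z, q.1), q.2))
      (univ ×ˢ K) :=
    (hω.comp continuousOn_snd fun _ hq => hq.2).mul hphase.cexp.continuousOn
  refine (hasFDerivAt_setIntegral_of_isCompact (𝕜 := ℂ) hK isOpen_univ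
    (Φ := fun ζ z' => fiberIntegrand ω ((z, ζ), z'))
    (Φ' := fun ζ z' => fiberIntegrand ω ((z, ζ), z') • cpairL (z' - z))
    (fun ζ hζ => ContinuousOn.uncurry_left
      (f := fun ζ z' => fiberIntegrand ω ((z, ζ), z')) ζ hζ hintegrand)
    (hintegrand.smul (by fun_prop)) (fun ξ _ z' _ => ?_) (mem_univ ζ)).differentiableAt
  have hexp := ((cpairL (z' - z)).hasFDerivAt (x := ξ)).cexp.const_mul (ω (z, z'))
  simpa only [fiberIntegrand, cpairL_apply, smul_smul] using hexp

theorem norm_fiberIntegral_le (hK : IsCompact K) {p : Pt n} {M r : ℝ}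
    (hM : ∀ z' ∈ K, ‖ω (p.1, z')‖ ≤ M) (hr : ∀ z' ∈ K, (cpair (z' - p.1) p.2).re ≤ r) :
    ‖fiberIntegral μ K ω p‖ ≤ M * Real.exp r * μ.real K := by
  refine norm_setIntegral_le_of_norm_le_const hK.measure_lt_top fun z' hz' => ?_
  rw [fiberIntegrand, norm_mul, norm_exp]
  gcongr
  · exact (norm_nonneg _).trans (hM z' hz')
  · exact hM z' hz'
  · exact hr z' hz'

theorem isBigO_fiberIntegral {c : ℝ} (hK : IsCompact K) (hB : Bornology.IsBounded B)
    (hω : ContinuousOn ω (closure B ×ˢ K))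
    (hdecay : ∀ z ∈ B, ∀ z' ∈ K, ∀ ζ ∈ Γ, (cpair (z' - z) ζ).re ≤ -c * eucNorm ζ) :
    fiberIntegral μ K ω =O[𝓟 (B ×ˢ Γ)] fun p => Real.exp (-c * eucNorm p.2) := by
  obtain ⟨M, hM⟩ := (hB.isCompact_closure.prod hK).exists_bound_of_continuousOn hω
  refine isBigO_principal.2 ⟨M * μ.real K, fun p hp => ?_⟩
  rw [Real.norm_of_nonneg (Real.exp_pos _).le, mul_right_comm]
  exact norm_fiberIntegral_le hK (fun z' hz' => hM _ ⟨subset_closure hp.1, hz'⟩)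
    fun z' hz' => hdecay p.1 hp.1 z' hz' p.2 hp.2

end FiberIntegral

section FiberCombination

/-- `IsFiberCombination μ K B O f` says that over `B` the function `f` is a combination of fiber
integrals with amplitudes smooth on `O`, with coefficients polynomial in `ζ`. Polynomials are
generated by the linear forms `⟨v, ζ⟩`; the values of `f` off `B` are unconstrained, as the
derivatives of a fiber integral are only known over `B`. -/
inductive IsFiberCombination (μ : Measure (Cn n)) (K B : Set (Cn n)) (O : Set (Pt n)) :
    (Pt n → ℂ) → Prop
  | fiberIntegral {ω : Pt n → ℂ} (hω : ContDiffOn ℝ (⊤ : ℕ∞) ω O) :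
      IsFiberCombination μ K B O (fiberIntegral μ K ω)
  | cpair_mul (v : Cn n) {f : Pt n → ℂ} (hf : IsFiberCombination μ K B O f) :
      IsFiberCombination μ K B O fun p => cpair v p.2 * f p
  | const_mul (a : ℂ) {f : Pt n → ℂ} (hf : IsFiberCombination μ K B O f) :
      IsFiberCombination μ K B O fun p => a * f p
  | add {f g : Pt n → ℂ} (hf : IsFiberCombination μ K B O f)
      (hg : IsFiberCombination μ K B O g) : IsFiberCombination μ K B O fun p => f p + g p
  | congr {f g : Pt n → ℂ} (hf : IsFiberCombination μ K B O f)
      (hgf : EqOn g f (Prod.fst ⁻¹' B)) : IsFiberCombination μ K B O g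

namespace IsFiberCombination

variable {μ : Measure (Cn n)} {K B Γ : Set (Cn n)} {O : Set (Pt n)} {f g : Pt n → ℂ}

theorem sub (hf : IsFiberCombination μ K B O f) (hg : IsFiberCombination μ K B O g) :
    IsFiberCombination μ K B O fun p => f p - g p := by
  simpa only [neg_one_mul, ← sub_eq_add_neg] using hf.add (hg.const_mul (-1))

variable [IsFiniteMeasureOnCompacts μ]

theorem differentiableAt (hK : IsCompact K) (hB : IsOpen B) (hO : IsOpen O) (hBK : B ×ˢ K ⊆ O)
    (hf : IsFiberCombination μ K B O f) {p : Pt n} (hp : p.1 ∈ B) : DifferentiableAt ℝ f p := by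
  have hB_nhds : Prod.fst ⁻¹' B ∈ 𝓝 p := (hB.preimage continuous_fst).mem_nhds hp
  induction hf with
  | fiberIntegral hω =>
    exact ((contDiffOn_fiberIntegral hK hB hO hBK hω).differentiableOn
      (by simp)).differentiableAt hB_nhds
  | cpair_mul w _ ih => exact (hasFDerivAt_cpair_snd w p).differentiableAt.mul ih
  | const_mul a _ ih => exact ih.const_mul a
  | add _ _ ihf ihg => exact ihf.add ihg
  | congr _ hgf ih => exact ih.congr_of_eventuallyEq (hgf.eventuallyEq_of_mem hB_nhds)

theorem fderiv_apply (hK : IsCompact K) (hB : IsOpen B) (hO : IsOpen O) (hBK : B ×ˢ K ⊆ O)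
    (hf : IsFiberCombination μ K B O f) (v : Cn n) :
    IsFiberCombination μ K B O fun p => fderiv ℝ f p (v, 0) := by
  induction hf with
  | fiberIntegral hω =>
    have hω' := (hω.fderiv_of_isOpen (m := (⊤ : ℕ∞)) hO (by simp)).clm_apply
      (contDiffOn_const (c := ((v, 0) : Pt n)))
    refine ((fiberIntegral hω').sub (cpair_mul v (fiberIntegral hω))).congr fun p hp => ?_
    exact fderiv_fiberIntegral_apply hK hB hO hBK (hω.of_le (by simp)) hp v
  | cpair_mul w hf ih =>
    refine (cpair_mul w ih).congr fun p hp => ?_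
    rw [((hasFDerivAt_cpair_snd w p).fun_mul
      (hf.differentiableAt hK hB hO hBK hp).hasFDerivAt).fderiv]
    simp
  | const_mul a hf ih =>
    refine (const_mul a ih).congr fun p hp => ?_
    simp [fderiv_const_mul (hf.differentiableAt hK hB hO hBK hp)]
  | add hf hg ihf ihg =>
    refine (ihf.add ihg).congr fun p hp => ?_
    simp [fderiv_fun_add (hf.differentiableAt hK hB hO hBK hp)
      (hg.differentiableAt hK hB hO hBK hp)]
  | congr _ hgf ih =>
    refine ih.congr fun p hp => ?_
    have hB_nhds : Prod.fst ⁻¹' B ∈ 𝓝 p := (hB.preimage continuous_fst).mem_nhds hp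
    rw [(hgf.eventuallyEq_of_mem hB_nhds).fderiv_eq]

theorem dz (hK : IsCompact K) (hB : IsOpen B) (hO : IsOpen O) (hBK : B ×ˢ K ⊆ O) (i : Fin n)
    (hf : IsFiberCombination μ K B O f) : IsFiberCombination μ K B O (dz i f) :=
  ((hf.fderiv_apply hK hB hO hBK _).sub
    ((hf.fderiv_apply hK hB hO hBK _).const_mul I)).const_mul (1 / 2)

theorem dzbar (hK : IsCompact K) (hB : IsOpen B) (hO : IsOpen O) (hBK : B ×ˢ K ⊆ O) (i : Fin n)
    (hf : IsFiberCombination μ K B O f) : IsFiberCombination μ K B O (dzbar i f) :=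
  ((hf.fderiv_apply hK hB hO hBK _).add
    ((hf.fderiv_apply hK hB hO hBK _).const_mul I)).const_mul (1 / 2)

theorem mixedDeriv (hK : IsCompact K) (hB : IsOpen B) (hO : IsOpen O) (hBK : B ×ˢ K ⊆ O)
    (α β : Fin n → ℕ) (hf : IsFiberCombination μ K B O f) :
    IsFiberCombination μ K B O (mixedDeriv α β f) := by
  refine List.foldrRecOn _ _ hf fun g hg d hd => ?_
  rw [List.mem_append, List.mem_ofFn, List.mem_ofFn] at hd
  obtain ⟨i, rfl⟩ | ⟨i, rfl⟩ := hd
  · exact Function.Iterate.rec _ hg (fun _ h => h.dz hK hB hO hBK i) _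
  · exact Function.Iterate.rec _ hg (fun _ h => h.dzbar hK hB hO hBK i) _

theorem isBigO_exp {c h : ℝ} (hK : IsCompact K) (hB : Bornology.IsBounded B)
    (hBK : closure B ×ˢ K ⊆ O)
    (hdecay : ∀ z ∈ B, ∀ z' ∈ K, ∀ ζ ∈ Γ, (cpair (z' - z) ζ).re ≤ -c * eucNorm ζ)
    (hf : IsFiberCombination μ K B O f) (hhc : h < c) :
    f =O[𝓟 (B ×ˢ Γ)] fun p => Real.exp (-h * eucNorm p.2) := by
  induction hf generalizing h with
  | fiberIntegral hω =>
    refine (isBigO_fiberIntegral hK hB (hω.continuousOn.mono hBK) hdecay).trans ?_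
    refine isBigO_of_le _ fun p => ?_
    have heuc : 0 ≤ eucNorm p.2 := Real.sqrt_nonneg _
    simp only [Real.norm_of_nonneg (Real.exp_pos _).le]
    gcongr
  | cpair_mul v _ ih =>
    -- The linear factor costs the part `r - h` of a rate `r` strictly between `h` and `c`.
    obtain ⟨r, hhr, hrc⟩ := exists_between hhc
    refine (((isBigO_cpair_exp v (sub_pos.2 hhr)).comp_tendsto
      (tendsto_top (f := Prod.snd))).mul (ih hrc)).congr_right fun p => ?_
    rw [Function.comp_apply, ← Real.exp_add]
    ring_nf
  | const_mul a _ ih => exact (ih hhc).const_mul_left a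
  | add _ _ ihf ihg => exact (ihf hhc).add (ihg hhc)
  | congr _ hgf ih =>
    refine (ih hhc).congr' ?_ EventuallyEq.rfl
    exact eventually_principal.2 fun p hp => (hgf hp.1).symm

end IsFiberCombination

end FiberCombination

theorem fiber_integral_decay_general {μ : Measure (Cn n)} [IsFiniteMeasureOnCompacts μ]
    {K B Γ : Set (Cn n)} {O : Set (Pt n)} {ω : Pt n → ℂ} {c : ℝ} (hK : IsCompact K)
    (hB : IsOpen B) (hB_bdd : Bornology.IsBounded B) (hO : IsOpen O) (hBK : closure B ×ˢ K ⊆ O)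
    (hω : ContDiffOn ℝ (⊤ : ℕ∞) ω O)
    (hdecay : ∀ z ∈ B, ∀ z' ∈ K, ∀ ζ ∈ Γ, (cpair (z' - z) ζ).re ≤ -c * eucNorm ζ) :
    ContDiffOn ℝ (⊤ : ℕ∞) (fiberIntegral μ K ω) (B ×ˢ univ) ∧
    (∀ z ∈ B, Differentiable ℂ fun ζ => fiberIntegral μ K ω (z, ζ)) ∧
    ∀ α β : Fin n → ℕ, ∀ h < c, ∃ C > 0, ∀ z ∈ B, ∀ ζ ∈ Γ,
      ‖mixedDeriv α β (fiberIntegral μ K ω) (z, ζ)‖ ≤ C * Real.exp (-h * eucNorm ζ) := by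
  have hBK' : B ×ˢ K ⊆ O := (prod_mono subset_closure subset_rfl).trans hBK
  refine ⟨prod_univ ▸ contDiffOn_fiberIntegral hK hB hO hBK' hω, fun z hz => ?_,
    fun α β h hhc => ?_⟩
  · exact differentiable_fiberIntegral_snd hK (hω.continuousOn.comp
      (by fun_prop : Continuous fun z' => (z, z')).continuousOn fun _ hz' => hBK' ⟨hz, hz'⟩)
  · have hcomb : IsFiberCombination μ K B O (fiberIntegral μ K ω) := .fiberIntegral hω
    have hderiv := (hcomb.mixedDeriv hK hB hO hBK' α β).isBigO_exp hK hB_bdd hBK hdecay hhc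
    obtain ⟨C, hC, hbound⟩ := hderiv.exists_pos
    refine ⟨C, hC, fun z hz ζ hζ => ?_⟩
    simpa only [Real.norm_of_nonneg (Real.exp_pos _).le] using
      isBigOWith_principal.1 hbound (z, ζ) ⟨hz, hζ⟩

/-- (Exponential decay of the fiber integrals of the symbol map.)
Suppose `Re⟨z' − z, ζ⟩ ≤ −c|ζ|` for `z ∈ B`, `z' ∈ K`, `ζ ∈ Γ` and `ω` is `C^∞` on a
neighborhood of `closure B × K`.  Then `F(z, ζ) = ∫_K ω(z, z') e^{⟨z'−z, ζ⟩} dλ(z')` is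
`C^∞` in `z`, holomorphic in `ζ` on `B × Γ`, and all its mixed `(z, z̄)`-derivatives
decay exponentially in `ζ` on `B × Γ`. -/
theorem fiber_integral_decay {n : ℕ}
    (K : Set (Cn n)) (hK : IsCompact K)
    (B : Set (Cn n)) (hBopen : IsOpen B) (hBbdd : Bornology.IsBounded B)
    (Γ : Set (Cn n)) (hΓ0 : (0 : Cn n) ∉ Γ)
    (hΓcone : ∀ ζ ∈ Γ, ∀ t : ℝ, 0 < t → t • ζ ∈ Γ)
    (c : ℝ) (hc : 0 < c)
    (hdecay : ∀ z ∈ B, ∀ z' ∈ K, ∀ ζ ∈ Γ, (cpair (z' - z) ζ).re ≤ -c * eucNorm ζ)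
    (ω : Pt n → ℂ) (O : Set (Pt n)) (hOopen : IsOpen O)
    (hOsub : (closure B) ×ˢ K ⊆ O) (hω : ContDiffOn ℝ (⊤ : ℕ∞) ω O)
    (F : Pt n → ℂ)
    (hF : ∀ x : Pt n,
      F x = ∫ z' in K, ω (x.1, z') * Complex.exp (cpair (z' - x.1) x.2)) :
    ContDiffOn ℝ (⊤ : ℕ∞) F (B ×ˢ Γ) ∧
    (∀ z ∈ B, DifferentiableOn ℂ (fun ζ => F (z, ζ)) Γ) ∧
    (∀ α β : Fin n → ℕ, ∃ C h : ℝ, 0 < C ∧ 0 < h ∧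
      ∀ z ∈ B, ∀ ζ ∈ Γ,
        ‖mixedDeriv α β F (z, ζ)‖ ≤ C * Real.exp (-h * eucNorm ζ)) := by
  obtain rfl : F = fiberIntegral volume K ω := funext hF
  obtain ⟨hsmooth, hholo, hbound⟩ :=
    fiber_integral_decay_general (μ := volume) hK hBopen hBbdd hOopen hOsub hω hdecay
  refine ⟨hsmooth.mono (prod_mono subset_rfl (subset_univ Γ)),
    fun z hz => (hholo z hz).differentiableOn, fun α β => ?_⟩
  obtain ⟨C, hC, hle⟩ := hbound α β (c / 2) (half_lt_self hc)
  exact ⟨C, c / 2, hC, half_pos hc, hle⟩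
end
end
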